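/- arXiv:2001.10360 — 2 statements merged into one kernel-verified Lean document; each statement's English description precedes it below -/
import Mathlib

section
/- Let n ≥ 2, m ∈ ℕ with 2 ≤ m < n. For every m-times weakly differentiable function u on ℝⁿ with |∇^m u| ∈ L^{n/m, 1}(ℝⁿ) there exist a polynomial P of degree at most m−1 and a constant C (independent of u) such that ‖u − P‖_{L^∞(ℝⁿ)} ≤ C ‖∇^m u‖_{L^{n/m,1}(ℝⁿ)}. In particular, u differs from a polynomial of degree at most m−1 by a bounded function. -/
/-!
Let `f = |∇^m u|` and `ω` the volume of the unit ball. The layer-cake formula bounds the integral of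
`f` over a ball of radius `ρ` by `M(ρ) = ∫₀^∞ min (ω ρ ^ n) |{f > l}| dl`, independently of the centre
(`layercake_ball`). Since this bound is translation invariant, it passes to every mollification of
`u`, whose classical derivatives are the mollified weak derivatives (`gradE_mollify_ball`).

For a smooth function `v` obeying this bound, the average `P` over `y` in the ball `B` of radius `R`
of the Taylor polynomials of `v` based at `y` satisfies, by the integral form of the remainder and
the change of variables `z = s • y + (1 - s) • x`,
`|v x - P x| ≤ |B|⁻¹ (2R) ^ m ∫₀¹ s ^ (m - n - 1) M(2Rs) ds` for `x` in `B`.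
Exchanging the integrals in `s` and `l` and computing the former gives a multiple, independent of
`R`, of `∫₀^∞ |{f > l}| ^ (m/n) dl` (`smooth_estimate`), and this is at most a multiple of the Lorentz
functional of `f` (`lorentz_lower`).

Thus the `k`-th mollification of `u` is uniformly close on the ball of radius `k + 1` to a polynomial
of degree at most `m - 1`. The mollifications converge to `u` almost everywhere, and closedness of
finite-dimensional spaces of functions yields a limit polynomial (`exists_limit_poly`).
-/

open MeasureTheory ENNReal Set Filter

noncomputable section

/-- Euclidean space ℝⁿ. -/
abbrev Euc (n : ℕ) := EuclideanSpace ℝ (Fin n)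

/-- Nonincreasing rearrangement of an `ℝ≥0∞`-valued function. -/
def rearrE {α : Type*} [MeasurableSpace α] (μ : Measure α) (f : α → ℝ≥0∞) (t : ℝ) : ℝ≥0∞ :=
  sInf {l : ℝ≥0∞ | μ {x | l < f x} ≤ ENNReal.ofReal t}

/-- Unsigned nonincreasing rearrangement `f*` of a real-valued function. -/
def rearr {α : Type*} [MeasurableSpace α] (μ : Measure α) (f : α → ℝ) (t : ℝ) : ℝ≥0∞ :=
  rearrE μ (fun x => ENNReal.ofReal |f x|) t

/-- Lorentz functional ‖f‖_{p,q} = ( ∫₀^∞ (t^{1/p-1/q} f*(t))^q dt )^{1/q}, for finite q. -/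
def lorentzNorm {α : Type*} [MeasurableSpace α] (μ : Measure α) (p q : ℝ) (f : α → ℝ) : ℝ≥0∞ :=
  (∫⁻ t in Ioi (0 : ℝ), (ENNReal.ofReal (t ^ (1 / p - 1 / q)) * rearr μ f t) ^ q) ^ (1 / q)

/-- `u` is `m`-times weakly differentiable on ℝⁿ, with weak derivatives
`D k a` of order `k ≤ m` in the directions `a : Fin k → Fin n`. -/
def HasWeakDerivs (n m : ℕ) (u : Euc n → ℝ) (D : ∀ k : ℕ, (Fin k → Fin n) → Euc n → ℝ) : Prop :=
  LocallyIntegrable u volume ∧ (∀ a : Fin 0 → Fin n, D 0 a = u) ∧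
    (∀ k (a : Fin k → Fin n), k ≤ m → LocallyIntegrable (D k a) volume) ∧
    ∀ k : ℕ, k ≤ m → ∀ (a : Fin k → Fin n) (φ : Euc n → ℝ),
      ContDiff ℝ (⊤ : ℕ∞) φ → HasCompactSupport φ →
        ∫ x, u x * iteratedFDeriv ℝ k φ x (fun j => EuclideanSpace.single (a j) 1)
          = (-1 : ℝ) ^ k * ∫ x, D k a x * φ x

/-- The ℓ¹-norm `|∇^m u|` of the vector of all `m`-th order weak derivatives. -/
def gradAbs (n m : ℕ) (D : ∀ k : ℕ, (Fin k → Fin n) → Euc n → ℝ) (x : Euc n) : ℝ :=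
  ∑ a : Fin m → Fin n, |D m a x|

/-! ### Rearrangements and one-dimensional integrals -/

/-- `c ^ α = α ∫₀^c t ^ (α - 1) dt`, in the direction used below; `c = ∞` is allowed. -/
lemma lintegral_rpow_lt (α : ℝ) (hα : 0 < α) (c : ℝ≥0∞) :
    c ^ α ≤ ENNReal.ofReal α *
      ∫⁻ t in Ioi (0:ℝ), (if ENNReal.ofReal t < c then ENNReal.ofReal (t ^ (α - 1)) else 0) := by
  have key : ∀ r : ℝ, 0 < r → ENNReal.ofReal r ≤ c → ENNReal.ofReal r ^ α ≤ ENNReal.ofReal α *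
      ∫⁻ t in Ioi (0:ℝ), (if ENNReal.ofReal t < c then ENNReal.ofReal (t ^ (α - 1)) else 0) := by
    intro r hr hrc
    have h1 : ∫⁻ t in Ioo (0:ℝ) r, ENNReal.ofReal (t ^ (α - 1)) = ENNReal.ofReal (r ^ α / α) := by
      have hi : IntegrableOn (fun t : ℝ => t ^ (α - 1)) (Ioc 0 r) := by
        rw [← intervalIntegrable_iff_integrableOn_Ioc_of_le hr.le]
        exact intervalIntegral.intervalIntegrable_rpow' (by linarith)
      rw [setLIntegral_congr Ioo_ae_eq_Ioc, ← ofReal_integral_eq_lintegral_ofReal hi,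
        ← intervalIntegral.integral_of_le hr.le, integral_rpow (Or.inl (by linarith))]
      · simp [Real.zero_rpow hα.ne']
      · filter_upwards [ae_restrict_mem measurableSet_Ioc] with t ht
        exact Real.rpow_nonneg ht.1.le _
    calc ENNReal.ofReal r ^ α = ENNReal.ofReal α * ENNReal.ofReal (r ^ α / α) := by
          rw [ENNReal.ofReal_rpow_of_pos hr, ← ENNReal.ofReal_mul hα.le]
          congr 1; field_simp
      _ ≤ _ := by
          rw [← h1]
          refine mul_le_mul' le_rfl ?_
          calc _ = ∫⁻ t in Ioo (0:ℝ) r,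
                  (if ENNReal.ofReal t < c then ENNReal.ofReal (t ^ (α - 1)) else 0) := by
                refine setLIntegral_congr_fun measurableSet_Ioo fun t ht => ?_
                have : ENNReal.ofReal t < c :=
                  lt_of_lt_of_le ((ENNReal.ofReal_lt_ofReal_iff hr).2 ht.2) hrc
                simp [this]
            _ ≤ _ := lintegral_mono_set Ioo_subset_Ioi_self
  rcases eq_or_ne c ⊤ with rfl | hc
  · rw [ENNReal.top_rpow_of_pos hα, top_le_iff]
    refine ENNReal.eq_top_of_forall_nnreal_le fun r => ?_
    -- `r + 1` instead of `r` keeps the base positive.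
    have h := key ((r + 1 : ℝ) ^ (1 / α)) (by positivity) le_top
    rw [ENNReal.ofReal_rpow_of_pos (by positivity), ← Real.rpow_mul (by positivity),
      one_div_mul_cancel hα.ne', Real.rpow_one] at h
    refine le_trans ?_ h
    rw [← ENNReal.ofReal_coe_nnreal]
    exact ENNReal.ofReal_le_ofReal (by linarith)
  rcases eq_or_ne c 0 with rfl | hc0
  · simp [hα]
  · have := key c.toReal (ENNReal.toReal_pos hc0 hc) (by rw [ENNReal.ofReal_toReal hc])
    rwa [ENNReal.ofReal_toReal hc] at this

/-- The distribution-function form of the `L^{n/m,1}` functional: it controls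
`∫₀^∞ μ{F > l} ^ (m/n) dl`. Only `F*(t) ≥ |{l > 0 : t < μ{F > l}}|` enters, followed by Tonelli. -/
lemma lorentz_lower {α : Type*} [MeasurableSpace α] (μ : Measure α) (n m : ℕ) (hm : 0 < m)
    (hn : 0 < n) (F : α → ℝ) (hF : ∀ x, 0 ≤ F x) :
    ∫⁻ l in Ioi (0:ℝ), μ {x | l < F x} ^ ((m:ℝ) / n) ≤
      ENNReal.ofReal ((m:ℝ) / n) * lorentzNorm μ ((n:ℝ) / m) 1 F := by
  have hα : 0 < (m:ℝ) / n := by positivity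
  have hanti : Antitone fun l : ℝ => μ {x | l < F x} := fun a b hab =>
    measure_mono fun x (hx : b < F x) => lt_of_le_of_lt hab hx
  have hmeas : Measurable fun l : ℝ => μ {x | l < F x} := hanti.measurable
  have hre : ∀ t : ℝ, 0 < t → ∫⁻ l in Ioi (0:ℝ),
      (if ENNReal.ofReal t < μ {x | l < F x} then (1:ℝ≥0∞) else 0) ≤ rearr μ F t := by
    intro t ht
    refine le_sInf fun b hb => ?_
    rcases eq_or_ne b ⊤ with rfl | hbt
    · exact le_top
    calc _ ≤ ∫⁻ l in Ioi (0:ℝ), (Ioc 0 b.toReal).indicator (fun _ => (1:ℝ≥0∞)) l := by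
          refine setLIntegral_mono' measurableSet_Ioi fun l hl => ?_
          split_ifs with h
          · rw [indicator_of_mem]
            refine ⟨hl, ?_⟩
            by_contra! hbl
            refine absurd (h.trans_le (le_trans (measure_mono ?_) hb)) (lt_irrefl _)
            intro x (hx : l < F x)
            change b < ENNReal.ofReal |F x|
            rw [abs_of_nonneg (hF x), ENNReal.lt_ofReal_iff_toReal_lt hbt]
            exact hbl.trans hx
          · exact zero_le
      _ ≤ ∫⁻ l, (Ioc 0 b.toReal).indicator (fun _ => (1:ℝ≥0∞)) l := setLIntegral_le_lintegral _ _
      _ = b := by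
          rw [lintegral_indicator measurableSet_Ioc]
          simp [ENNReal.ofReal_toReal hbt]
  have hL : lorentzNorm μ ((n:ℝ) / m) 1 F =
      ∫⁻ t in Ioi (0:ℝ), ENNReal.ofReal (t ^ ((m:ℝ) / n - 1)) * rearr μ F t := by
    simp [lorentzNorm]
  rw [hL]
  calc _ ≤ ∫⁻ l in Ioi (0:ℝ), ENNReal.ofReal ((m:ℝ) / n) * ∫⁻ t in Ioi (0:ℝ),
        (if ENNReal.ofReal t < μ {x | l < F x} then ENNReal.ofReal (t ^ ((m:ℝ) / n - 1)) else 0) :=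
        lintegral_mono fun l => lintegral_rpow_lt _ hα _
    _ = ENNReal.ofReal ((m:ℝ) / n) * ∫⁻ l in Ioi (0:ℝ), ∫⁻ t in Ioi (0:ℝ),
        (if ENNReal.ofReal t < μ {x | l < F x} then ENNReal.ofReal (t ^ ((m:ℝ) / n - 1)) else 0) :=
        lintegral_const_mul' _ _ ENNReal.ofReal_ne_top
    _ = ENNReal.ofReal ((m:ℝ) / n) * ∫⁻ t in Ioi (0:ℝ), ∫⁻ l in Ioi (0:ℝ),
        (if ENNReal.ofReal t < μ {x | l < F x} then ENNReal.ofReal (t ^ ((m:ℝ) / n - 1)) else 0) := by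
        congr 1
        refine lintegral_lintegral_swap ?_
        refine Measurable.aemeasurable ?_
        refine Measurable.ite (measurableSet_lt (by fun_prop) (hmeas.comp measurable_fst)) (by fun_prop)
          measurable_const
    _ ≤ _ := by
        refine mul_le_mul' le_rfl ?_
        refine setLIntegral_mono' measurableSet_Ioi fun t ht => ?_
        grw [← hre t ht]
        rw [← lintegral_const_mul' _ _ ENNReal.ofReal_ne_top]
        refine lintegral_mono fun l => ?_
        split_ifs <;> simp

/-- The integral splits at `s₀`, where the two entries of the minimum agree. -/
lemma lintegral_min_real (n m : ℕ) (hm : 0 < m) (hmn : m < n) (A s₀ : ℝ) (hA : 0 < A)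
    (hs : 0 < s₀) :
    ∫⁻ s in Ioi (0:ℝ), ENNReal.ofReal (s ^ ((m:ℝ) - n - 1)) *
        min (ENNReal.ofReal (A * s ^ n)) (ENNReal.ofReal (A * s₀ ^ n)) ≤
      ENNReal.ofReal (A * (1 / m + 1 / ((n:ℝ) - m)) * s₀ ^ m) := by
  have hm' : (0:ℝ) < m := by exact_mod_cast hm
  have hmn' : (0:ℝ) < (n:ℝ) - m := by rw [sub_pos]; exact_mod_cast hmn
  have h1 : ∫⁻ s in Ioc (0:ℝ) s₀, ENNReal.ofReal (A * s ^ ((m:ℝ) - 1)) =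
      ENNReal.ofReal (A * (s₀ ^ m / m)) := by
    have hi : IntegrableOn (fun t : ℝ => A * t ^ ((m:ℝ) - 1)) (Ioc 0 s₀) := by
      rw [← intervalIntegrable_iff_integrableOn_Ioc_of_le hs.le]
      exact (intervalIntegral.intervalIntegrable_rpow' (by linarith)).const_mul _
    rw [← ofReal_integral_eq_lintegral_ofReal hi,
        ← intervalIntegral.integral_of_le hs.le, intervalIntegral.integral_const_mul,
        integral_rpow (Or.inl (by linarith))]
    · simp [Real.zero_rpow hm'.ne']
    · filter_upwards [ae_restrict_mem measurableSet_Ioc] with t ht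
      exact mul_nonneg hA.le (Real.rpow_nonneg ht.1.le _)
  have h2 : ∫⁻ s in Ioi s₀, ENNReal.ofReal (A * s₀ ^ n * s ^ ((m:ℝ) - n - 1)) =
      ENNReal.ofReal (A * (s₀ ^ m / ((n:ℝ) - m))) := by
    have hi : IntegrableOn (fun t : ℝ => A * s₀ ^ n * t ^ ((m:ℝ) - n - 1)) (Ioi s₀) :=
      (integrableOn_Ioi_rpow_of_lt (by linarith) hs).const_mul _
    rw [← ofReal_integral_eq_lintegral_ofReal hi, integral_const_mul,
        integral_Ioi_rpow_of_lt (by linarith) hs]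
    · congr 1
      rw [show (m:ℝ) - n - 1 + 1 = m - n by ring, Real.rpow_sub hs, Real.rpow_natCast,
        Real.rpow_natCast]
      have : (m:ℝ) - n ≠ 0 := by linarith
      field_simp
      ring_nf
    · filter_upwards [ae_restrict_mem measurableSet_Ioi] with t ht
      have : 0 < t := hs.trans ht
      simp only [Pi.zero_apply]; positivity
  rw [← Ioc_union_Ioi_eq_Ioi hs.le]
  refine (lintegral_union_le _ _ _).trans ?_
  calc _ ≤ (∫⁻ s in Ioc (0:ℝ) s₀, ENNReal.ofReal (A * s ^ ((m:ℝ) - 1))) +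
        ∫⁻ s in Ioi s₀, ENNReal.ofReal (A * s₀ ^ n * s ^ ((m:ℝ) - n - 1)) := by
        gcongr ?_ + ?_
        · refine setLIntegral_mono' measurableSet_Ioc fun s hs' => ?_
          grw [min_le_left]
          rw [← ENNReal.ofReal_mul (Real.rpow_nonneg hs'.1.le _)]
          refine le_of_eq ?_
          congr 1
          rw [show (m:ℝ) - 1 = (m - n - 1) + n by ring, Real.rpow_add hs'.1, Real.rpow_natCast]
          ring
        · refine setLIntegral_mono' measurableSet_Ioi fun s hs' => ?_
          have : 0 < s := hs.trans hs'
          grw [min_le_right]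
          rw [← ENNReal.ofReal_mul (Real.rpow_nonneg this.le _)]
          refine le_of_eq ?_
          congr 1
          ring
    _ = _ := by
        rw [h1, h2, ← ENNReal.ofReal_add (by positivity) (by positivity)]
        congr 1
        field_simp

/-- Rescaled form of `lintegral_min_real` for an arbitrary level `c`. After division by `ω * L ^ n`
the constant no longer depends on `L`; this is where the scaling exponent `n/m` is used. -/
lemma lintegral_min (n m : ℕ) (hm : 0 < m) (hmn : m < n) (ω L : ℝ) (hω : 0 < ω) (hL : 0 < L)
    (c : ℝ≥0∞) :
    ENNReal.ofReal (L ^ m) * ∫⁻ s in Ioi (0:ℝ), ENNReal.ofReal (s ^ ((m:ℝ) - n - 1)) *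
        min (ENNReal.ofReal (ω * L ^ n * s ^ n)) c ≤
      ENNReal.ofReal (ω * L ^ n * ((1 / m + 1 / ((n:ℝ) - m)) * (ω ^ ((m:ℝ) / n))⁻¹)) *
        c ^ ((m:ℝ) / n) := by
  have hm' : (0:ℝ) < m := by exact_mod_cast hm
  have hn' : (0:ℝ) < n := by exact_mod_cast hm.trans hmn
  have hmn' : (0:ℝ) < (n:ℝ) - m := by rw [sub_pos]; exact_mod_cast hmn
  rcases eq_or_ne c ⊤ with rfl | hc
  · rw [ENNReal.top_rpow_of_pos (by positivity), ENNReal.mul_top]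
    · exact le_top
    · rw [Ne, ENNReal.ofReal_eq_zero, not_le]; positivity
  rcases eq_or_ne c 0 with rfl | hc0
  · simp
  -- `r` is the radius of a ball of volume `c`, if `ω` is the volume of the unit ball.
  set r : ℝ := (c.toReal / ω) ^ (1 / (n:ℝ)) with hr
  have hcp : 0 < c.toReal := ENNReal.toReal_pos hc0 hc
  have hrp : 0 < r := by positivity
  have hrn : r ^ n = c.toReal / ω := by
    rw [← Real.rpow_natCast, hr, ← Real.rpow_mul (by positivity), one_div_mul_cancel hn'.ne',
      Real.rpow_one]
  have hrm : r ^ m = c.toReal ^ ((m:ℝ) / n) * (ω ^ ((m:ℝ) / n))⁻¹ := by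
    rw [← Real.rpow_natCast, hr, ← Real.rpow_mul (by positivity), Real.div_rpow hcp.le hω.le,
      div_eq_mul_inv, one_div_mul_eq_div]
  have h := lintegral_min_real n m hm hmn (ω * L ^ n) (r / L) (by positivity) (by positivity)
  have e : ω * L ^ n * (r / L) ^ n = c.toReal := by
    rw [div_pow, hrn]; field_simp
  rw [e, ENNReal.ofReal_toReal hc] at h
  grw [h]
  refine le_of_eq ?_
  conv_rhs => rw [← ENNReal.ofReal_toReal hc, ENNReal.ofReal_rpow_of_pos hcp]
  rw [← ENNReal.ofReal_mul (by positivity), ← ENNReal.ofReal_mul (by positivity)]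
  congr 1
  rw [div_pow, hrm]
  field_simp

/-! ### Averaged Taylor polynomials of smooth functions -/

/-- The tuple of coordinate directions `e_{a 0}, …, e_{a (k-1)}`. -/
def bvec {n k : ℕ} (a : Fin k → Fin n) : Fin k → Euc n := fun j => EuclideanSpace.single (a j) 1

lemma iteratedFDeriv_diag {n k : ℕ} (u : Euc n → ℝ) (z v : Euc n) :
    iteratedFDeriv ℝ k u z (fun _ => v) =
      ∑ a : Fin k → Fin n, (∏ j, v (a j)) * iteratedFDeriv ℝ k u z (bvec a) := by
  have hv : v = ∑ i, v i • EuclideanSpace.single i (1:ℝ) := by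
    ext j
    simp [Finset.sum_apply, Pi.single_apply]
  conv_lhs => rw [hv]
  rw [ContinuousMultilinearMap.map_sum]
  refine Finset.sum_congr rfl fun a _ => ?_
  rw [ContinuousMultilinearMap.map_smul_univ]
  rfl

/-- The `ℓ¹`-norm of the vector of all classical `m`-th order partial derivatives, as an extended
nonnegative real. -/
def gradE {n : ℕ} (m : ℕ) (u : Euc n → ℝ) (z : Euc n) : ℝ≥0∞ :=
  ∑ a : Fin m → Fin n, ‖iteratedFDeriv ℝ m u z (bvec a)‖ₑ

lemma enorm_diag_le {n m : ℕ} (u : Euc n → ℝ) (z v : Euc n) (L : ℝ) (hL : ‖v‖ ≤ L) :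
    ‖iteratedFDeriv ℝ m u z (fun _ => v)‖ₑ ≤ ENNReal.ofReal (L ^ m) * gradE m u z := by
  rw [iteratedFDeriv_diag, gradE, Finset.mul_sum]
  refine (enorm_sum_le _ _).trans (Finset.sum_le_sum fun a _ => ?_)
  rw [enorm_mul]
  gcongr
  rw [← ofReal_norm]
  refine ENNReal.ofReal_le_ofReal ?_
  rw [norm_prod]
  calc ∏ j, ‖v (a j)‖ ≤ ∏ _j : Fin m, L :=
        Finset.prod_le_prod (fun _ _ => norm_nonneg _)
          fun j _ => (PiLp.norm_apply_le v (a j)).trans hL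
    _ = L ^ m := by simp

/-- The Taylor polynomial of `u` of degree at most `m - 1` based at `y`, evaluated at `x`. -/
def taylorE {n : ℕ} (m : ℕ) (u : Euc n → ℝ) (y x : Euc n) : ℝ :=
  ∑ k ∈ Finset.range m, (k.factorial : ℝ)⁻¹ * iteratedFDeriv ℝ k u y (fun _ => x - y)

lemma continuous_deriv_apply {n k : ℕ} {u : Euc n → ℝ} (hu : ContDiff ℝ (⊤ : ℕ∞) u)
    (v : Fin k → Euc n) : Continuous fun y => iteratedFDeriv ℝ k u y v := by
  have : Continuous (iteratedFDeriv ℝ k u) := hu.continuous_iteratedFDeriv (by exact_mod_cast le_top)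
  exact this.eval_const v

/-- Expansion in monomials of `x`, with coefficients that depend on the base point `y` only. -/
lemma taylorE_expand {n : ℕ} (m : ℕ) (u : Euc n → ℝ) (y x : Euc n) :
    taylorE m u y x = ∑ k ∈ Finset.range m, ∑ a : Fin k → Fin n,
      ∑ s ∈ (Finset.univ : Finset (Fin k)).powerset,
        ((k.factorial : ℝ)⁻¹ * iteratedFDeriv ℝ k u y (bvec a) *
          ∏ j ∈ Finset.univ \ s, (-y (a j))) * ∏ j ∈ s, x (a j) := by
  unfold taylorE
  refine Finset.sum_congr rfl fun k _ => ?_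
  rw [iteratedFDeriv_diag, Finset.mul_sum]
  refine Finset.sum_congr rfl fun a _ => ?_
  have : ∏ j, (x - y) (a j) = ∏ j, (x (a j) + -y (a j)) := by
    simp [sub_eq_add_neg]
  rw [this, Finset.prod_add, Finset.sum_mul, Finset.mul_sum]
  refine Finset.sum_congr rfl fun s _ => ?_
  ring

/-- Averaging the base point over a ball averages the coefficients, so it gives a polynomial. -/
lemma exists_avg_poly {n m : ℕ} (hm : 0 < m) {u : Euc n → ℝ} (hu : ContDiff ℝ (⊤ : ℕ∞) u) (R : ℝ) :
    ∃ P : MvPolynomial (Fin n) ℝ, P.totalDegree ≤ m - 1 ∧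
      ∀ x : Euc n, MvPolynomial.eval (fun i => x i) P =
        ⨍ y in Metric.ball (0 : Euc n) R, taylorE m u y x := by
  set B := Metric.ball (0 : Euc n) R
  have hint : ∀ f : Euc n → ℝ, Continuous f → IntegrableOn f B := fun f hf =>
    (hf.continuousOn.integrableOn_compact (isCompact_closedBall (0 : Euc n) R)).mono_set
      Metric.ball_subset_closedBall
  set c : ∀ k : ℕ, (Fin k → Fin n) → Finset (Fin k) → Euc n → ℝ := fun k a s y =>
    (k.factorial : ℝ)⁻¹ * iteratedFDeriv ℝ k u y (bvec a) * ∏ j ∈ Finset.univ \ s, (-y (a j)) with hc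
  have hcc : ∀ k a s, Continuous (c k a s) := fun k a s => by
    have := continuous_deriv_apply hu (bvec a)
    simp only [hc]
    fun_prop
  refine ⟨∑ k ∈ Finset.range m, ∑ a : Fin k → Fin n,
      ∑ s ∈ (Finset.univ : Finset (Fin k)).powerset,
        MvPolynomial.C (⨍ y in B, c k a s y) * ∏ j ∈ s, MvPolynomial.X (a j), ?_, ?_⟩
  · refine MvPolynomial.totalDegree_finsetSum_le fun k hk => ?_
    refine MvPolynomial.totalDegree_finsetSum_le fun a _ => ?_
    refine MvPolynomial.totalDegree_finsetSum_le fun s _ => ?_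
    refine (MvPolynomial.totalDegree_mul _ _).trans ?_
    rw [MvPolynomial.totalDegree_C, zero_add]
    refine (MvPolynomial.totalDegree_finsetProd _ _).trans ?_
    simp only [MvPolynomial.totalDegree_X, Finset.sum_const, smul_eq_mul, mul_one]
    have := s.card_le_univ
    have := Finset.mem_range.1 hk
    simp at *
    omega
  · intro x
    simp only [map_sum, map_mul, MvPolynomial.eval_C, map_prod, MvPolynomial.eval_X]
    simp only [setAverage_eq, smul_eq_mul]
    simp_rw [taylorE_expand]
    rw [integral_finsetSum]
    · rw [Finset.mul_sum]
      refine Finset.sum_congr rfl fun k _ => ?_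
      rw [integral_finsetSum]
      · rw [Finset.mul_sum]
        refine Finset.sum_congr rfl fun a _ => ?_
        rw [integral_finsetSum]
        · rw [Finset.mul_sum]
          refine Finset.sum_congr rfl fun s _ => ?_
          rw [integral_mul_const, mul_assoc]
        · exact fun s _ => (hint _ (hcc k a s)).mul_const _
      · exact fun a _ => integrable_finsetSum _ fun s _ => (hint _ (hcc k a s)).mul_const _
    · exact fun k _ => integrable_finsetSum _ fun a _ => integrable_finsetSum _
        fun s _ => (hint _ (hcc k a s)).mul_const _

lemma continuous_taylorE {n m : ℕ} {u : Euc n → ℝ} (hu : ContDiff ℝ (⊤ : ℕ∞) u) (x : Euc n) :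
    Continuous fun y => taylorE m u y x := by
  simp_rw [taylorE_expand]
  refine continuous_finsetSum _ fun k _ => continuous_finsetSum _ fun a _ =>
    continuous_finsetSum _ fun s _ => ?_
  have := continuous_deriv_apply hu (bvec a)
  fun_prop

lemma continuous_gradE {n m : ℕ} {u : Euc n → ℝ} (hu : ContDiff ℝ (⊤ : ℕ∞) u) :
    Continuous (gradE m u) := by
  unfold gradE
  refine continuous_finsetSum _ fun a _ => ?_
  exact (continuous_deriv_apply hu (bvec a)).enorm

/-- Integral form of the remainder, with the factor `1 / (m - 1)!` bounded by `1` and the parameter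
of the segment reversed, so that `s = 0` corresponds to the point `x`. -/
lemma taylor_remainder_le {n m : ℕ} (hm : 0 < m) {u : Euc n → ℝ} (hu : ContDiff ℝ (⊤ : ℕ∞) u)
    (x y : Euc n) (L : ℝ) (hL : ‖x - y‖ ≤ L) :
    ‖u x - taylorE m u y x‖ₑ ≤ ∫⁻ s in Ioc (0:ℝ) 1,
      ENNReal.ofReal (s ^ (m - 1)) * (ENNReal.ofReal (L ^ m) * gradE m u (s • y + (1 - s) • x)) := by
  obtain ⟨p, rfl⟩ : ∃ p, m = p + 1 := ⟨m - 1, by omega⟩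
  have h := map_add_eq_sum_add_integral_iteratedFDeriv (f := u) (x := y) (y := x - y) (n := p)
    (fun t _ => (hu.of_le (by exact_mod_cast le_top)).contDiffAt)
  rw [add_sub_cancel] at h
  have h2 : u x - taylorE (p + 1) u y x = (p.factorial : ℝ)⁻¹ • ∫ s in (0:ℝ)..1,
      s ^ p • iteratedFDeriv ℝ (p + 1) u (y + (1 - s) • (x - y)) (fun _ => x - y) := by
    have := intervalIntegral.integral_comp_sub_left (a := 0) (b := 1) (fun s : ℝ =>
      s ^ p • iteratedFDeriv ℝ (p + 1) u (y + (1 - s) • (x - y)) (fun _ => x - y)) 1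
    simp only [sub_self, sub_zero] at this
    rw [← this, h]
    simp [taylorE]
  rw [h2, enorm_smul, intervalIntegral.integral_of_le zero_le_one]
  have h3 : ‖(p.factorial : ℝ)⁻¹‖ₑ ≤ 1 := by
    rw [← ofReal_norm, ← ENNReal.ofReal_one]
    refine ENNReal.ofReal_le_ofReal ?_
    rw [norm_inv, Real.norm_natCast]
    exact inv_le_one_of_one_le₀ (by exact_mod_cast Nat.one_le_iff_ne_zero.2 p.factorial_ne_zero)
  grw [h3, one_mul, enorm_integral_le_lintegral_enorm]
  refine setLIntegral_mono' measurableSet_Ioc fun s hs => ?_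
  rw [enorm_smul, show y + (1 - s) • (x - y) = s • y + (1 - s) • x by module]
  rw [add_tsub_cancel_right]
  refine mul_le_mul' ?_ (enorm_diag_le _ _ _ _ hL)
  rw [← ofReal_norm, Real.norm_of_nonneg (pow_nonneg hs.1.le _)]

lemma lintegral_affine {n : ℕ} (h : Euc n → ℝ≥0∞) (hh : Measurable h) (s : ℝ) (hs : 0 < s)
    (c : Euc n) :
    ∫⁻ y, h (s • y + c) = ENNReal.ofReal ((s ^ n)⁻¹) * ∫⁻ y, h y := by
  have h1 : ∫⁻ y, h (s • y + c) = ∫⁻ y, h (y + c) ∂(Measure.map (s • ·) volume) := by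
    rw [lintegral_map (by fun_prop) (by fun_prop)]
  rw [h1, Measure.map_addHaar_smul _ hs.ne', lintegral_smul_measure, lintegral_add_right_eq_self,
    finrank_euclideanSpace_fin, abs_of_pos (by positivity), smul_eq_mul]

/-- The volume of the unit ball of `ℝⁿ`. -/
def ballVol (n : ℕ) : ℝ := (volume (Metric.ball (0 : Euc n) 1)).toReal

lemma ballVol_pos (n : ℕ) : 0 < ballVol n :=
  ENNReal.toReal_pos (Metric.measure_ball_pos _ _ one_pos).ne' measure_ball_lt_top.ne

lemma volume_ball_eq {n : ℕ} (x : Euc n) {ρ : ℝ} (hρ : 0 < ρ) :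
    volume (Metric.ball x ρ) = ENNReal.ofReal (ballVol n * ρ ^ n) := by
  rw [Measure.addHaar_ball_of_pos _ _ hρ, finrank_euclideanSpace_fin, mul_comm,
    ENNReal.ofReal_mul (ballVol_pos n).le, ballVol, ENNReal.ofReal_toReal measure_ball_lt_top.ne]

/-- Approximation of a smooth function on a ball of radius `R` by its averaged Taylor polynomial,
with a constant independent of `R`. In the application `μ l` is the measure of the superlevel set
`{|∇^m u| > l}`, and the hypothesis says that the integral of the gradient over each ball is at most
what this distribution function allows. -/
lemma smooth_estimate {n m : ℕ} (hm : 0 < m) (hmn : m < n) {u : Euc n → ℝ}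
    (hu : ContDiff ℝ (⊤ : ℕ∞) u) (μ : ℝ → ℝ≥0∞) (hμ : Measurable μ)
    (hG : ∀ (x : Euc n) (ρ : ℝ), 0 < ρ → ∫⁻ z in Metric.ball x ρ, gradE m u z ≤
      ∫⁻ l in Ioi (0:ℝ), min (ENNReal.ofReal (ballVol n * ρ ^ n)) (μ l))
    (R : ℝ) (hR : 0 < R) :
    ∃ P : MvPolynomial (Fin n) ℝ, P.totalDegree ≤ m - 1 ∧ ∀ x ∈ Metric.ball (0 : Euc n) R,
      ‖u x - MvPolynomial.eval (fun i => x i) P‖ₑ ≤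
        ENNReal.ofReal (2 ^ n * ((1 / m + 1 / ((n:ℝ) - m)) * (ballVol n ^ ((m:ℝ) / n))⁻¹)) *
          ∫⁻ l in Ioi (0:ℝ), μ l ^ ((m:ℝ) / n) := by
  have hω := ballVol_pos n
  obtain ⟨P, hP, hPe⟩ := exists_avg_poly hm hu R
  refine ⟨P, hP, fun x hx => ?_⟩
  set B := Metric.ball (0 : Euc n) R with hB
  have hBv : volume B = ENNReal.ofReal (ballVol n * R ^ n) := volume_ball_eq _ hR
  have hB0 : volume B ≠ 0 := by rw [hBv, Ne, ENNReal.ofReal_eq_zero, not_le]; positivity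
  have hBt : volume B ≠ ⊤ := by rw [hBv]; exact ENNReal.ofReal_ne_top
  have hGm : Measurable (gradE m u) := (continuous_gradE hu).measurable
  set L := 2 * R with hL
  have hLp : 0 < L := by positivity
  have h1 : ‖u x - MvPolynomial.eval (fun i => x i) P‖ₑ ≤
      (volume B)⁻¹ * ∫⁻ y in B, ‖u x - taylorE m u y x‖ₑ := by
    have hi : IntegrableOn (fun y => taylorE m u y x) B :=
      ((continuous_taylorE hu x).continuousOn.integrableOn_compact
        (isCompact_closedBall (0 : Euc n) R)).mono_set Metric.ball_subset_closedBall
    have hci : IntegrableOn (fun _ => u x) B := integrableOn_const hBt (by simp)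
    have hB1 : volume.real B ≠ 0 := ENNReal.toReal_ne_zero.2 ⟨hB0, hBt⟩
    have : u x - MvPolynomial.eval (fun i => x i) P =
        (volume.real B)⁻¹ • ∫ y in B, (u x - taylorE m u y x) := by
      rw [hPe, integral_sub hci hi, setAverage_eq, setIntegral_const,
        smul_sub, smul_smul, inv_mul_cancel₀ hB1, one_smul]
    rw [this, enorm_smul]
    refine mul_le_mul' (le_of_eq ?_) (enorm_integral_le_lintegral_enorm _)
    rw [enorm_inv hB1]
    congr 1
    rw [← ofReal_norm, Real.norm_of_nonneg measureReal_nonneg, ofReal_measureReal hBt]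
  -- The map `y ↦ s • y + (1 - s) • x` sends the ball into the ball of radius `L * s` about `x`.
  have h2 : ∀ s ∈ Ioc (0:ℝ) 1, ∫⁻ y in B, gradE m u (s • y + (1 - s) • x) ≤
      ENNReal.ofReal ((s ^ n)⁻¹) *
        ∫⁻ l in Ioi (0:ℝ), min (ENNReal.ofReal (ballVol n * L ^ n * s ^ n)) (μ l) := by
    intro s hs
    have hsub : ∀ y ∈ B, s • y + (1 - s) • x ∈ Metric.ball x (L * s) := by
      intro y hy
      rw [mem_ball_iff_norm, show s • y + (1 - s) • x - x = s • (y - x) by module, norm_smul,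
        Real.norm_of_nonneg hs.1.le, mul_comm]
      refine mul_lt_mul_of_pos_right ?_ hs.1
      rw [hB, mem_ball_zero_iff] at hx hy
      calc ‖y - x‖ ≤ ‖y‖ + ‖x‖ := norm_sub_le _ _
        _ < L := by rw [hL]; linarith
    calc _ ≤ ∫⁻ y, (Metric.ball x (L * s)).indicator (gradE m u) (s • y + (1 - s) • x) := by
          rw [← lintegral_indicator measurableSet_ball]
          refine lintegral_mono fun y => ?_
          by_cases hy : y ∈ B
          · rw [indicator_of_mem hy, indicator_of_mem (hsub y hy)]
          · rw [indicator_of_notMem hy]; exact zero_le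
      _ = ENNReal.ofReal ((s ^ n)⁻¹) * ∫⁻ z in Metric.ball x (L * s), gradE m u z := by
          rw [lintegral_affine _ (hGm.indicator measurableSet_ball) s hs.1,
            lintegral_indicator measurableSet_ball]
      _ ≤ _ := by
          have := hG x (L * s) (mul_pos hLp hs.1)
          rw [mul_pow, ← mul_assoc] at this
          exact mul_le_mul' le_rfl this
  have h3 : ∫⁻ y in B, ‖u x - taylorE m u y x‖ₑ ≤
      ∫⁻ s in Ioc (0:ℝ) 1, ENNReal.ofReal (s ^ (m - 1)) * (ENNReal.ofReal (L ^ m) *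
        ∫⁻ y in B, gradE m u (s • y + (1 - s) • x)) := by
    calc _ ≤ ∫⁻ y in B, ∫⁻ s in Ioc (0:ℝ) 1, ENNReal.ofReal (s ^ (m - 1)) *
            (ENNReal.ofReal (L ^ m) * gradE m u (s • y + (1 - s) • x)) := by
          refine setLIntegral_mono' measurableSet_ball fun y hy => ?_
          refine taylor_remainder_le hm hu x y L ?_
          rw [hB, mem_ball_zero_iff] at hx hy
          linarith [norm_sub_le x y]
      _ = ∫⁻ s in Ioc (0:ℝ) 1, ∫⁻ y in B, ENNReal.ofReal (s ^ (m - 1)) *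
            (ENNReal.ofReal (L ^ m) * gradE m u (s • y + (1 - s) • x)) := by
          refine lintegral_lintegral_swap (Measurable.aemeasurable ?_)
          have : Measurable fun p : Euc n × ℝ => gradE m u (p.2 • p.1 + (1 - p.2) • x) :=
            hGm.comp (by fun_prop)
          simp only [Function.uncurry_def]
          fun_prop
      _ = _ := by
          refine lintegral_congr fun s => ?_
          rw [lintegral_const_mul' _ _ ENNReal.ofReal_ne_top,
            lintegral_const_mul' _ _ ENNReal.ofReal_ne_top]
  have h4 : ∫⁻ y in B, ‖u x - taylorE m u y x‖ₑ ≤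
      ∫⁻ l in Ioi (0:ℝ), ENNReal.ofReal (L ^ m) * ∫⁻ s in Ioi (0:ℝ),
        ENNReal.ofReal (s ^ ((m:ℝ) - n - 1)) *
          min (ENNReal.ofReal (ballVol n * L ^ n * s ^ n)) (μ l) := by
    refine h3.trans ?_
    calc _ ≤ ∫⁻ s in Ioc (0:ℝ) 1, ∫⁻ l in Ioi (0:ℝ), ENNReal.ofReal (L ^ m) * (
        ENNReal.ofReal (s ^ ((m:ℝ) - n - 1)) *
          min (ENNReal.ofReal (ballVol n * L ^ n * s ^ n)) (μ l)) := by
          refine setLIntegral_mono' measurableSet_Ioc fun s hs => ?_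
          grw [h2 s hs]
          rw [lintegral_const_mul' _ _ ENNReal.ofReal_ne_top,
            lintegral_const_mul' _ _ ENNReal.ofReal_ne_top, mul_left_comm, ← mul_assoc (ENNReal.ofReal (s ^ (m-1)))]
          refine le_of_eq ?_
          congr 2
          rw [← ENNReal.ofReal_mul (pow_nonneg hs.1.le _)]
          congr 1
          rw [show (m:ℝ) - n - 1 = ((m - 1 : ℕ) : ℝ) - n by rw [Nat.cast_pred hm]; ring,
            Real.rpow_sub hs.1, Real.rpow_natCast, Real.rpow_natCast, div_eq_mul_inv]
      _ ≤ ∫⁻ s in Ioi (0:ℝ), ∫⁻ l in Ioi (0:ℝ), ENNReal.ofReal (L ^ m) * (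
        ENNReal.ofReal (s ^ ((m:ℝ) - n - 1)) *
          min (ENNReal.ofReal (ballVol n * L ^ n * s ^ n)) (μ l)) :=
          lintegral_mono_set Ioc_subset_Ioi_self
      _ = ∫⁻ l in Ioi (0:ℝ), ∫⁻ s in Ioi (0:ℝ), ENNReal.ofReal (L ^ m) * (
        ENNReal.ofReal (s ^ ((m:ℝ) - n - 1)) *
          min (ENNReal.ofReal (ballVol n * L ^ n * s ^ n)) (μ l)) := by
          refine lintegral_lintegral_swap (Measurable.aemeasurable ?_)
          simp only [Function.uncurry_def]
          fun_prop
      _ = _ := by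
          refine lintegral_congr fun s => ?_
          rw [lintegral_const_mul' _ _ ENNReal.ofReal_ne_top]
  grw [h1, h4, lintegral_mono fun l => lintegral_min n m hm hmn (ballVol n) L hω hLp (μ l)]
  rw [lintegral_const_mul' _ _ ENNReal.ofReal_ne_top, ← mul_assoc]
  refine mul_le_mul' (le_of_eq ?_) le_rfl
  rw [hBv, ← ENNReal.ofReal_inv_of_pos (by positivity), ← ENNReal.ofReal_mul (by positivity)]
  congr 1
  rw [hL, mul_pow]
  field_simp

/-! ### Mollification -/

/-- The convolution `w ⋆ η` of real functions on `ℝⁿ`. -/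
def conv {n : ℕ} (w η : Euc n → ℝ) (x : Euc n) : ℝ := ∫ y, w y * η (x - y)

lemma contDiff_conv {n : ℕ} {w η : Euc n → ℝ} (hw : LocallyIntegrable w volume)
    (hη : ContDiff ℝ (⊤ : ℕ∞) η) (hc : HasCompactSupport η) : ContDiff ℝ (⊤ : ℕ∞) (conv w η) :=
  hc.contDiff_convolution_right (ContinuousLinearMap.mul ℝ ℝ) hw hη

lemma contDiff_deriv_apply {n k : ℕ} {η : Euc n → ℝ} (hη : ContDiff ℝ (⊤ : ℕ∞) η)
    (v : Fin k → Euc n) : ContDiff ℝ (⊤ : ℕ∞) fun z => iteratedFDeriv ℝ k η z v := by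
  have h : ContDiff ℝ (⊤ : ℕ∞) (iteratedFDeriv ℝ k η) :=
    hη.iteratedFDeriv_right (by exact_mod_cast le_top)
  exact (ContinuousMultilinearMap.apply ℝ (fun _ : Fin k => Euc n) ℝ v).contDiff.comp h

lemma hasCompactSupport_deriv_apply {n k : ℕ} {η : Euc n → ℝ} (hc : HasCompactSupport η)
    (v : Fin k → Euc n) : HasCompactSupport fun z => iteratedFDeriv ℝ k η z v :=
  (hc.iteratedFDeriv k).comp_left
    (g := fun f : ContinuousMultilinearMap ℝ (fun _ : Fin k => Euc n) ℝ => f v) rfl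

lemma differentiable_iteratedFDeriv' {n k : ℕ} {η : Euc n → ℝ} (hη : ContDiff ℝ (⊤ : ℕ∞) η) :
    Differentiable ℝ (iteratedFDeriv ℝ k η) :=
  hη.differentiable_iteratedFDeriv (by exact_mod_cast ENat.natCast_lt_top k)

lemma iteratedFDeriv_conv {n : ℕ} {w η : Euc n → ℝ} (hw : LocallyIntegrable w volume)
    (hη : ContDiff ℝ (⊤ : ℕ∞) η) (hc : HasCompactSupport η) (k : ℕ) (v : Fin k → Euc n)
    (x : Euc n) :
    iteratedFDeriv ℝ k (conv w η) x v = conv w (fun z => iteratedFDeriv ℝ k η z v) x := by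
  induction k generalizing x with
  | zero => simp [conv]
  | succ k ih =>
    rw [(differentiable_iteratedFDeriv' (contDiff_conv hw hη hc) x).iteratedFDeriv_succ_apply_left']
    simp_rw [ih]
    have hcs := hasCompactSupport_deriv_apply (k := k) hc (Fin.tail v)
    have hcd := contDiff_deriv_apply (k := k) hη (Fin.tail v)
    have hcd1 : ContDiff ℝ 1 fun z => iteratedFDeriv ℝ k η z (Fin.tail v) :=
      hcd.of_le (by exact_mod_cast le_top)
    have h := hcs.hasFDerivAt_convolution_right (ContinuousLinearMap.mul ℝ ℝ) hw hcd1 x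
    have h' : fderiv ℝ (conv w fun z => iteratedFDeriv ℝ k η z (Fin.tail v)) x = _ := h.fderiv
    rw [h', convolution_precompR_apply _ hw (hcs.fderiv ℝ) (hcd1.continuous_fderiv one_ne_zero)]
    simp_rw [(differentiable_iteratedFDeriv' hη _).iteratedFDeriv_succ_apply_left']
    rfl

lemma iteratedFDeriv_reflect {n k : ℕ} {η : Euc n → ℝ} (hη : ContDiff ℝ (⊤ : ℕ∞) η)
    (x y : Euc n) (v : Fin k → Euc n) :
    iteratedFDeriv ℝ k (fun y => η (x - y)) y v = (-1) ^ k * iteratedFDeriv ℝ k η (x - y) v := by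
  set g : Euc n →L[ℝ] Euc n := -ContinuousLinearMap.id ℝ (Euc n) with hg
  have h1 : (fun y => η (x - y)) = fun y => (η ∘ g) (y - x) := by
    ext y; simp [hg]
  rw [h1, iteratedFDeriv_comp_sub, g.iteratedFDeriv_comp_right hη _ (by exact_mod_cast le_top),
    ContinuousMultilinearMap.compContinuousLinearMap_apply]
  have h2 : (fun i => g (v i)) = fun i => (-1 : ℝ) • v i := by
    ext i; simp [hg]
  rw [h2, ContinuousMultilinearMap.map_smul_univ]
  simp [hg]

/-- Mollification turns weak derivatives into classical ones. -/
lemma deriv_mollify {n m : ℕ} {u : Euc n → ℝ} {D : ∀ k : ℕ, (Fin k → Fin n) → Euc n → ℝ}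
    (h : HasWeakDerivs n m u D) {η : Euc n → ℝ}
    (hη : ContDiff ℝ (⊤ : ℕ∞) η) (hc : HasCompactSupport η) (a : Fin m → Fin n) (x : Euc n) :
    iteratedFDeriv ℝ m (conv u η) x (bvec a) = conv (D m a) η x := by
  rw [iteratedFDeriv_conv h.1 hη hc]
  have h1 := h.2.2.2 m le_rfl a (fun y => η (x - y)) (hη.comp (contDiff_const.sub contDiff_id))
    (hc.comp_homeomorph (Homeomorph.subLeft x))
  have h2 : ∀ y, u y * iteratedFDeriv ℝ m (fun y => η (x - y)) y
      (fun j => EuclideanSpace.single (a j) 1) =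
      (-1) ^ m * (u y * iteratedFDeriv ℝ m η (x - y) (bvec a)) := by
    intro y
    rw [iteratedFDeriv_reflect hη]
    unfold bvec
    ring
  simp_rw [h2] at h1
  rw [integral_const_mul] at h1
  exact mul_left_cancel₀ (pow_ne_zero _ (by norm_num)) h1

lemma gradAbs_nonneg {n m : ℕ} (D : ∀ k : ℕ, (Fin k → Fin n) → Euc n → ℝ) (x : Euc n) :
    0 ≤ gradAbs n m D x := Finset.sum_nonneg fun _ _ => abs_nonneg _

lemma gradAbs_aemeasurable {n m : ℕ} {u : Euc n → ℝ} {D : ∀ k : ℕ, (Fin k → Fin n) → Euc n → ℝ}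
    (h : HasWeakDerivs n m u D) : AEMeasurable (gradAbs n m D) := by
  unfold gradAbs
  refine Finset.aemeasurable_fun_sum _ fun a _ => ?_
  exact (h.2.2.1 m a le_rfl).aestronglyMeasurable.aemeasurable.abs

lemma gradE_mollify_le {n m : ℕ} {u : Euc n → ℝ} {D : ∀ k : ℕ, (Fin k → Fin n) → Euc n → ℝ}
    (h : HasWeakDerivs n m u D) {η : Euc n → ℝ}
    (hη : ContDiff ℝ (⊤ : ℕ∞) η) (hc : HasCompactSupport η) (x : Euc n) :
    gradE m (conv u η) x ≤ ∫⁻ y, ENNReal.ofReal (gradAbs n m D y) * ‖η (x - y)‖ₑ := by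
  have hD : ∀ a, AEMeasurable (D m a) := fun a =>
    (h.2.2.1 m a le_rfl).aestronglyMeasurable.aemeasurable
  have hηm : Measurable fun y => ‖η (x - y)‖ₑ := by
    have := hη.continuous
    exact (this.comp (continuous_const.sub continuous_id)).measurable.enorm
  calc gradE m (conv u η) x ≤ ∑ a, ∫⁻ y, ‖D m a y‖ₑ * ‖η (x - y)‖ₑ := by
        refine Finset.sum_le_sum fun a _ => ?_
        rw [deriv_mollify h hη hc]
        refine (enorm_integral_le_lintegral_enorm _).trans (le_of_eq ?_)
        simp_rw [enorm_mul]
    _ = ∫⁻ y, ∑ a, ‖D m a y‖ₑ * ‖η (x - y)‖ₑ := by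
        refine (lintegral_finsetSum' _ fun a _ => ?_).symm
        exact (hD a).enorm.mul hηm.aemeasurable
    _ = _ := by
        refine lintegral_congr fun y => ?_
        rw [← Finset.sum_mul, gradAbs, ENNReal.ofReal_sum_of_nonneg fun _ _ => abs_nonneg _]
        simp_rw [← Real.norm_eq_abs, ofReal_norm]

/-- Layer-cake bound over balls. The right-hand side does not depend on the centre. -/
lemma layercake_ball {n : ℕ} {F : Euc n → ℝ} (hF : AEMeasurable F) (hF0 : ∀ x, 0 ≤ F x)
    (x : Euc n) {ρ : ℝ} (hρ : 0 < ρ) :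
    ∫⁻ z in Metric.ball x ρ, ENNReal.ofReal (F z) ≤
      ∫⁻ l in Ioi (0:ℝ), min (ENNReal.ofReal (ballVol n * ρ ^ n)) (volume {z | l < F z}) := by
  rw [lintegral_eq_lintegral_meas_lt _ (ae_of_all _ hF0) hF.restrict]
  refine lintegral_mono fun l => le_min ?_ (Measure.restrict_le_self _)
  rw [← volume_ball_eq x hρ]
  calc _ ≤ volume.restrict (Metric.ball x ρ) univ := measure_mono (subset_univ _)
    _ = _ := by simp

/-- A bound for ball integrals that is uniform in the centre survives averaging over translations. -/
lemma mollify_ball {n : ℕ} {F : Euc n → ℝ≥0∞} (hF : Measurable F) {N : Euc n → ℝ≥0∞}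
    (hN : Measurable N) (hN1 : ∫⁻ w, N w = 1) (x : Euc n) (ρ : ℝ) (M : ℝ≥0∞)
    (hM : ∀ x' : Euc n, ∫⁻ z in Metric.ball x' ρ, F z ≤ M) :
    ∫⁻ z in Metric.ball x ρ, ∫⁻ y, F y * N (z - y) ≤ M := by
  have h1 : ∀ z, ∫⁻ y, F y * N (z - y) = ∫⁻ w, N w * F (z - w) := by
    intro z
    rw [← lintegral_sub_left_eq_self _ z]
    simp [mul_comm]
  simp_rw [h1]
  rw [lintegral_lintegral_swap (by simp only [Function.uncurry_def]; fun_prop)]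
  have h2 : ∀ w, ∫⁻ z in Metric.ball x ρ, F (z - w) = ∫⁻ z in Metric.ball (x - w) ρ, F z := by
    intro w
    rw [← lintegral_indicator measurableSet_ball, ← lintegral_indicator measurableSet_ball,
      ← lintegral_sub_right_eq_self ((Metric.ball (x - w) ρ).indicator F) w]
    refine lintegral_congr fun z => ?_
    by_cases hz : z ∈ Metric.ball x ρ
    · rw [indicator_of_mem hz, indicator_of_mem]
      simpa [dist_sub_right] using hz
    · rw [indicator_of_notMem hz, indicator_of_notMem]
      simpa [dist_sub_right] using hz
  calc _ = ∫⁻ w, N w * ∫⁻ z in Metric.ball (x - w) ρ, F z := by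
        refine lintegral_congr fun w => ?_
        rw [lintegral_const_mul _ (by fun_prop), h2]
    _ ≤ ∫⁻ w, N w * M := lintegral_mono fun w => mul_le_mul' le_rfl (hM _)
    _ = M := by rw [lintegral_mul_const _ hN, hN1, one_mul]

lemma gradE_mollify_ball {n m : ℕ} {u : Euc n → ℝ} {D : ∀ k : ℕ, (Fin k → Fin n) → Euc n → ℝ}
    (h : HasWeakDerivs n m u D) {η : Euc n → ℝ}
    (hη : ContDiff ℝ (⊤ : ℕ∞) η) (hc : HasCompactSupport η) (h1 : ∫⁻ w, ‖η w‖ₑ = 1)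
    (x : Euc n) {ρ : ℝ} (hρ : 0 < ρ) :
    ∫⁻ z in Metric.ball x ρ, gradE m (conv u η) z ≤
      ∫⁻ l in Ioi (0:ℝ), min (ENNReal.ofReal (ballVol n * ρ ^ n))
        (volume {z | l < gradAbs n m D z}) := by
  have hF : AEMeasurable fun y => ENNReal.ofReal (gradAbs n m D y) :=
    (gradAbs_aemeasurable h).ennreal_ofReal
  calc _ ≤ ∫⁻ z in Metric.ball x ρ, ∫⁻ y, hF.mk _ y * ‖η (z - y)‖ₑ := by
        refine lintegral_mono fun z => (gradE_mollify_le h hη hc z).trans (le_of_eq ?_)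
        refine lintegral_congr_ae ?_
        filter_upwards [hF.ae_eq_mk] with y hy
        rw [hy]
    _ ≤ _ := by
        refine mollify_ball hF.measurable_mk hη.continuous.measurable.enorm h1 x ρ _ fun x' => ?_
        refine le_trans (le_of_eq ?_)
          (layercake_ball (gradAbs_aemeasurable h) (gradAbs_nonneg D) x' hρ)
        exact lintegral_congr_ae (ae_restrict_of_ae hF.ae_eq_mk.symm)

/-! ### Passage to the limit and conclusion -/

/-- If `v k → u` almost everywhere and `v k` is within `K` of a polynomial of degree at most `d` on
the ball of radius `k + 1`, then `u` is within `K` of such a polynomial on the whole space. The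
polynomials are bounded at each point where `v k` converges, so they converge pointwise there along
an ultrafilter; the limit is again a polynomial because a finite-dimensional subspace of the
function space `S → ℝ` with the product topology is closed. -/
lemma exists_limit_poly {n d : ℕ} {u : Euc n → ℝ} {v : ℕ → Euc n → ℝ}
    (hv : ∀ᵐ x, Tendsto (fun k => v k x) atTop (nhds (u x))) {K : ℝ≥0∞} (hK : K ≠ ⊤)
    (hP : ∀ k : ℕ, ∃ P : MvPolynomial (Fin n) ℝ, P.totalDegree ≤ d ∧
      ∀ x ∈ Metric.ball (0 : Euc n) (k + 1), ‖v k x - MvPolynomial.eval (fun i => x i) P‖ₑ ≤ K) :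
    ∃ P : MvPolynomial (Fin n) ℝ, P.totalDegree ≤ d ∧
      eLpNorm (fun x => u x - MvPolynomial.eval (fun i => x i) P) ⊤ volume ≤ K := by
  choose Q hQd hQ using hP
  set S : Set (Euc n) := {x | Tendsto (fun k => v k x) atTop (nhds (u x))} with hS
  let Φ : MvPolynomial (Fin n) ℝ →ₗ[ℝ] (S → ℝ) :=
    LinearMap.pi fun x => (MvPolynomial.aeval (fun i => (x : Euc n) i)).toLinearMap
  have hΦ : ∀ P x, Φ P x = MvPolynomial.eval (fun i => (x : Euc n) i) P := fun P x => by
    simp [Φ, MvPolynomial.aeval_eq_eval]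
  let V := MvPolynomial.restrictTotalDegree (Fin n) ℝ d
  let W := V.map Φ
  have hWc : IsClosed (W : Set (S → ℝ)) := W.closed_of_finiteDimensional
  have hle : (hyperfilter ℕ : Filter ℕ) ≤ atTop := Nat.hyperfilter_le_atTop
  have hball : ∀ x : Euc n, ∀ᶠ k : ℕ in atTop, x ∈ Metric.ball (0 : Euc n) (k + 1) := by
    intro x
    filter_upwards [eventually_ge_atTop ⌈‖x‖⌉₊] with k hk
    rw [mem_ball_zero_iff]
    have := Nat.ceil_le.1 hk
    linarith
  have hex : ∀ x : S, ∃ y : ℝ, Tendsto (fun k => Φ (Q k) x) (hyperfilter ℕ) (nhds y) := by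
    intro x
    have hb : ∀ᶠ k in atTop, Φ (Q k) x ∈ Metric.closedBall (0:ℝ) (‖u x‖ + 1 + K.toReal) := by
      have h2 : ∀ᶠ k in atTop, ‖v k x‖ < ‖u x‖ + 1 :=
        (Tendsto.norm x.2).eventually_lt_const (by linarith)
      filter_upwards [hball x, h2] with k hk1 hk2
      rw [mem_closedBall_zero_iff, hΦ]
      have h3 := hQ k x hk1
      rw [← ofReal_norm, ENNReal.ofReal_le_iff_le_toReal hK] at h3
      have := norm_sub_norm_le (MvPolynomial.eval (fun i => (x : Euc n) i) (Q k)) (v k x)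
      rw [norm_sub_rev] at this
      linarith
    obtain ⟨y, -, hy⟩ := (isCompact_closedBall (0:ℝ) _).ultrafilter_le_nhds
      ((hyperfilter ℕ).map fun k => Φ (Q k) x) (by
        rw [le_principal_iff]
        exact hle hb)
    exact ⟨y, hy⟩
  choose g hg using hex
  have hgW : g ∈ (W : Set (S → ℝ)) := by
    refine hWc.mem_of_tendsto (tendsto_pi_nhds.2 hg) (Eventually.of_forall fun k => ?_)
    exact Submodule.mem_map_of_mem ((MvPolynomial.mem_restrictTotalDegree _ _ _).2 (hQd k))
  obtain ⟨P, hPV, hPg⟩ := hgW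
  refine ⟨P, (MvPolynomial.mem_restrictTotalDegree _ _ _).1 hPV, ?_⟩
  rw [eLpNorm_exponent_top]
  refine eLpNormEssSup_le_of_ae_enorm_bound ?_
  filter_upwards [hv] with x hx
  have h1 : Tendsto (fun k => ‖v k x - Φ (Q k) ⟨x, hx⟩‖ₑ) (hyperfilter ℕ)
      (nhds ‖u x - g ⟨x, hx⟩‖ₑ) := ((hx.mono_left hle).sub (hg ⟨x, hx⟩)).enorm
  rw [← hPg, hΦ] at h1
  refine le_of_tendsto h1 (hle ?_)
  filter_upwards [hball x] with k hk
  rw [hΦ]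
  exact hQ k x hk

/-- Let n ≥ 2, 2 ≤ m < n. There is C such that every m-times weakly
differentiable u on ℝⁿ with |∇^m u| ∈ L^{n/m,1}(ℝⁿ) satisfies, for some polynomial P of
degree ≤ m−1, ‖u − P‖_{L^∞(ℝⁿ)} ≤ C‖∇^m u‖_{L^{n/m,1}(ℝⁿ)}; in particular u differs from
a polynomial of degree at most m−1 by a bounded function. -/
theorem stmt_7 (n m : ℕ) (hn : 2 ≤ n) (hm : 2 ≤ m) (hmn : m < n) :
    ∃ C : ℝ, 0 < C ∧
      ∀ (u : Euc n → ℝ) (D : ∀ k : ℕ, (Fin k → Fin n) → Euc n → ℝ),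
        HasWeakDerivs n m u D →
        lorentzNorm volume ((n : ℝ) / m) 1 (gradAbs n m D) < ⊤ →
        ∃ P : MvPolynomial (Fin n) ℝ, P.totalDegree ≤ m - 1 ∧
          eLpNorm (fun x => u x - MvPolynomial.eval (fun i => x i) P) ⊤ volume ≤
            ENNReal.ofReal C * lorentzNorm volume ((n : ℝ) / m) 1 (gradAbs n m D) := by
  have hm0 : 0 < m := by omega
  have hω := ballVol_pos n
  have hmn' : (0:ℝ) < (n:ℝ) - m := by rw [sub_pos]; exact_mod_cast hmn
  have hn' : (0:ℝ) < n := by exact_mod_cast hm0.trans hmn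
  have hm' : (0:ℝ) < m := by exact_mod_cast hm0
  set C₀ : ℝ := 2 ^ n * ((1 / m + 1 / ((n:ℝ) - m)) * (ballVol n ^ ((m:ℝ) / n))⁻¹) with hC₀
  have hC₀p : 0 < C₀ := by positivity
  refine ⟨C₀ * ((m:ℝ) / n), by positivity, fun u D h hfin => ?_⟩
  set F := gradAbs n m D with hF
  set K := ENNReal.ofReal (C₀ * ((m:ℝ) / n)) * lorentzNorm volume ((n : ℝ) / m) 1 F with hK
  let φ : ℕ → ContDiffBump (0 : Euc n) := fun k =>
    ⟨1 / (k + 1), 2 * (1 / (k + 1)), by positivity, by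
      have : (0:ℝ) < 1 / (k + 1) := by positivity
      linarith⟩
  have hanti : Antitone fun l : ℝ => volume {x | l < F x} := fun a b hab =>
    measure_mono fun x (hx : b < F x) => lt_of_le_of_lt hab hx
  refine exists_limit_poly (v := fun k => conv u ((φ k).normed volume)) ?_
    (ENNReal.mul_ne_top ENNReal.ofReal_ne_top hfin.ne) fun k => ?_
  · have h1 := ContDiffBump.ae_convolution_tendsto_right_of_locallyIntegrable (μ := volume)
      (φ := φ) (l := atTop) (K := 2) (by
        have := (tendsto_one_div_add_atTop_nhds_zero_nat (𝕜 := ℝ)).const_mul 2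
        simpa [φ] using this) (Eventually.of_forall fun k => le_rfl) h.1
    filter_upwards [h1] with x hx
    refine hx.congr fun k => ?_
    rw [convolution_eq_swap]
    refine integral_congr_ae (ae_of_all _ fun y => ?_)
    simp [mul_comm]
  · have hs : ContDiff ℝ (⊤ : ℕ∞) ((φ k).normed volume) := (φ k).contDiff_normed
    have hc : HasCompactSupport ((φ k).normed volume) := (φ k).hasCompactSupport_normed
    have h1 : ∫⁻ w, ‖(φ k).normed volume w‖ₑ = 1 := by
      have := ofReal_integral_eq_lintegral_ofReal ((φ k).integrable_normed (μ := volume))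
        (ae_of_all _ fun x => (φ k).nonneg_normed x)
      rw [(φ k).integral_normed, ENNReal.ofReal_one] at this
      rw [this]
      refine lintegral_congr fun x => ?_
      rw [← ofReal_norm, Real.norm_of_nonneg ((φ k).nonneg_normed x)]
    obtain ⟨P, hPd, hP⟩ := smooth_estimate hm0 hmn (contDiff_conv h.1 hs hc) _ hanti.measurable
      (fun x ρ hρ => gradE_mollify_ball h hs hc h1 x hρ) (k + 1) (by positivity)
    refine ⟨P, hPd, fun x hx => (hP x hx).trans ?_⟩
    grw [lorentz_lower volume n m hm0 (by omega) F (gradAbs_nonneg D)]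
    rw [← mul_assoc, ← ENNReal.ofReal_mul hC₀p.le]
end
end

section
/- Let n ≥ 2, m < n, and suppose u is m-times weakly differentiable on ℝⁿ with |∇^m u| ∈ L^{n/m,1}(ℝⁿ), and u has some decay at infinity in the sense that |{x ∈ ℝⁿ : |u(x)| > λ}| < ∞ for every λ > 0. Then u is bounded on ℝⁿ (up to modification on a null set) and ‖u‖_{L^∞} ≤ C‖∇^m u‖_{L^{n/m,1}} with C independent of u. -/
/-!
For smooth `φ`, the `m`-th finite difference `Δ_y^m φ(x)` is the average of `D^m φ(x + t y)(y, …, y)`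
over `t` with respect to a probability measure `ν`, the law of a sum of `m` independent uniform
variables on `[0, 1]`. This `ν` lives on `[0, m]` and satisfies `ν (-∞, τ] ≤ τ ^ m`
(`exists_averaging_measure`). Testing against smooth functions shows that for each `y` the same
identity holds at almost every `x` for a function with weak derivatives (`fwdDiff_ae_eq`).

Solving the difference for `u(x)` gives
`|u(x)| ≤ ∑_{k=1}^m (m choose k) |u(x + k y)| + |y|^m ∫ |∇^m u(x + t y)| dν(t)`.
Fix `λ > 0`. As `{|u| > λ}` has finite measure, for large `R` at least half of the annulus
`R < |y| < 2R` consists of directions `y` with `|u(x + k y)| ≤ λ` for all `1 ≤ k ≤ m`. Averaging over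
these `y`, substituting `z = t y`, and using `ν (-∞, τ] ≤ τ ^ m`, which yields exactly the weight
`|z|^(m - n)`, leads to
`|u(x)| ≤ C λ + C ∫ |∇^m u(x + z)| |z|^(m - n) dz`
with `C` independent of `R` and `λ` (`enorm_le_of_ae_line`). Then `λ → 0`; this is where the decay
removes the polynomial.

The Riesz potential on the right is bounded by the `L^{n/m,1}` norm (`riesz_potential_le`): by the
layer cake formula it is an integral over the superlevel sets `E` of `|∇^m u|`, for which
`∫_E |z|^(m - n) dz ≤ C |E|^(m/n)`, and `∫ |{f > l}|^(m/n) dl` is controlled by the Lorentz norm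
through `V^α ≤ ∫_0^V t^(α - 1) dt`.
-/

open MeasureTheory ENNReal Set Filter

noncomputable section

/-! ### One-dimensional averages of derivatives -/

/-- The function `t ↦ D^m φ(x + t v)(v, …, v)` has derivative `D^(m+1) φ(x + t v)(v, …, v)`. -/
lemma hasDerivAt_iteratedFDeriv_line {n : ℕ} {φ : Euc n → ℝ} (hφ : ContDiff ℝ (⊤ : ℕ∞) φ)
    (m : ℕ) (x v : Euc n) (t : ℝ) :
    HasDerivAt (fun t : ℝ => iteratedFDeriv ℝ m φ (x + t • v) (fun _ => v))
      (iteratedFDeriv ℝ (m + 1) φ (x + t • v) (fun _ => v)) t := by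
  have h1 : DifferentiableAt ℝ (iteratedFDeriv ℝ m φ) (x + t • v) :=
    (hφ.differentiable_iteratedFDeriv (m := m) (by exact_mod_cast ENat.natCast_lt_top m)) _
  have h2 : HasDerivAt (fun t : ℝ => x + t • v) v t := by
    simpa using ((hasDerivAt_id t).smul_const v).const_add x
  have h3 := h1.hasFDerivAt.comp_hasDerivAt t h2
  have h4 := ((ContinuousMultilinearMap.apply ℝ (fun _ : Fin m => Euc n) ℝ
    (fun _ => v)).hasFDerivAt).comp_hasDerivAt t h3
  rw [iteratedFDeriv_succ_apply_left]
  exact h4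

lemma continuous_iteratedFDeriv_apply {n : ℕ} {φ : Euc n → ℝ} (hφ : ContDiff ℝ (⊤ : ℕ∞) φ)
    (m : ℕ) (w : Fin m → Euc n) : Continuous (fun x => iteratedFDeriv ℝ m φ x w) := by
  have h1 : Continuous (iteratedFDeriv ℝ m φ) :=
    hφ.continuous_iteratedFDeriv (by exact_mod_cast le_top)
  exact (ContinuousMultilinearMap.apply ℝ (fun _ : Fin m => Euc n) ℝ w).continuous.comp h1

lemma hasCompactSupport_iteratedFDeriv_apply {n : ℕ} {φ : Euc n → ℝ} (hc : HasCompactSupport φ)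
    (m : ℕ) (w : Fin m → Euc n) : HasCompactSupport (fun x => iteratedFDeriv ℝ m φ x w) :=
  (hc.iteratedFDeriv (𝕜 := ℝ) m).comp_left
    (g := fun L : ContinuousMultilinearMap ℝ (fun _ : Fin m => Euc n) ℝ => L w) rfl

lemma exists_bound_iteratedFDeriv_apply {n : ℕ} {φ : Euc n → ℝ} (hφ : ContDiff ℝ (⊤ : ℕ∞) φ)
    (hc : HasCompactSupport φ) (m : ℕ) (w : Fin m → Euc n) :
    ∃ B : ℝ, ∀ x, ‖iteratedFDeriv ℝ m φ x w‖ ≤ B :=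
  (continuous_iteratedFDeriv_apply hφ m w).bounded_above_of_compact_support
    (hasCompactSupport_iteratedFDeriv_apply hc m w)

lemma integrable_iteratedFDeriv_line {n : ℕ} {φ : Euc n → ℝ} (hφ : ContDiff ℝ (⊤ : ℕ∞) φ)
    (hc : HasCompactSupport φ) (m : ℕ) (x v : Euc n) (ν : Measure ℝ) [IsFiniteMeasure ν] :
    Integrable (fun t : ℝ => iteratedFDeriv ℝ m φ (x + t • v) (fun _ => v)) ν := by
  obtain ⟨B, hB⟩ := exists_bound_iteratedFDeriv_apply hφ hc m (fun _ => v)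
  refine Integrable.of_bound (Continuous.aestronglyMeasurable ?_) B (Eventually.of_forall ?_)
  · exact (continuous_iteratedFDeriv_apply hφ m (fun _ => v)).comp (by fun_prop)
  · intro t; exact hB _

/-- Iterated differences are averages of iterated derivatives along the same line. The measure
constructed here is the law of a sum of `m` independent uniform variables on `[0, 1]`; its mass near the
origin is controlled by `τ ^ m`. -/
lemma exists_averaging_measure {n : ℕ} (m : ℕ) : ∃ ν : Measure ℝ, IsProbabilityMeasure ν ∧
    ν (Icc 0 (m : ℝ))ᶜ = 0 ∧ (∀ τ : ℝ, ν (Iic τ) ≤ ENNReal.ofReal τ ^ m) ∧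
    ∀ φ : Euc n → ℝ, ContDiff ℝ (⊤ : ℕ∞) φ → HasCompactSupport φ → ∀ x v : Euc n,
      (fwdDiff v)^[m] φ x = ∫ t, iteratedFDeriv ℝ m φ (x + t • v) (fun _ => v) ∂ν := by
  induction m with
  | zero =>
    refine ⟨Measure.dirac 0, inferInstance, ?_, ?_, ?_⟩
    · simp
    · intro τ; simpa using prob_le_one (μ := Measure.dirac (0 : ℝ))
    · intro φ hφ hc x v; simp
  | succ m ih =>
    obtain ⟨ν, hν, hs, hb, hf⟩ := ih
    let U : Measure ℝ := volume.restrict (Icc 0 1)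
    have hU : IsProbabilityMeasure U := ⟨by simp [U]⟩
    refine ⟨ν ∗ U, inferInstance, ?_, ?_, ?_⟩
    · have hms : MeasurableSet (Icc (0 : ℝ) ((m + 1 : ℕ) : ℝ))ᶜ := measurableSet_Icc.compl
      rw [← lintegral_indicator_one hms, Measure.lintegral_conv (measurable_one.indicator hms),
        lintegral_eq_zero_iff' (by
          have : Measurable ((Icc (0 : ℝ) ((m + 1 : ℕ) : ℝ))ᶜ.indicator (1 : ℝ → ℝ≥0∞)) :=
            measurable_one.indicator hms
          exact (Measurable.lintegral_prod_right' (ν := U)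
            (f := fun p : ℝ × ℝ => (Icc (0 : ℝ) ((m + 1 : ℕ) : ℝ))ᶜ.indicator
              (1 : ℝ → ℝ≥0∞) (p.1 + p.2)) (this.comp (by fun_prop))).aemeasurable)]
      have h1 : ∀ᵐ s ∂ν, s ∈ Icc (0 : ℝ) m := by
        rw [ae_iff]; exact hs
      filter_upwards [h1] with s hs'
      have : ∀ᵐ r ∂U, (Icc (0 : ℝ) ((m + 1 : ℕ) : ℝ))ᶜ.indicator
              (1 : ℝ → ℝ≥0∞) (s + r) = 0 := by
        filter_upwards [ae_restrict_mem measurableSet_Icc] with r hr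
        rw [indicator_of_notMem]
        simp only [mem_compl_iff, not_not, mem_Icc] at *
        push_cast
        constructor <;> linarith [hs'.1, hs'.2, hr.1, hr.2]
      simpa using lintegral_congr_ae this
    · intro τ
      have hms : MeasurableSet (Iic τ) := measurableSet_Iic
      rw [Measure.conv_comm, ← lintegral_indicator_one hms,
        Measure.lintegral_conv (measurable_one.indicator hms)]
      have h1 : ∀ r : ℝ, ∫⁻ s, (Iic τ).indicator (1 : ℝ → ℝ≥0∞) (r + s) ∂ν = ν (Iic (τ - r)) := by
        intro r
        rw [← lintegral_indicator_one measurableSet_Iic]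
        congr 1; ext s
        simp only [indicator, mem_Iic, le_sub_iff_add_le', Pi.one_apply]
      simp_rw [h1]
      calc ∫⁻ r, ν (Iic (τ - r)) ∂U
          ≤ ∫⁻ r in Icc 0 1, (Icc 0 τ).indicator (fun _ => ENNReal.ofReal τ ^ m) r := by
            refine setLIntegral_mono_ae' measurableSet_Icc (Eventually.of_forall ?_)
            intro r hr
            by_cases h : r ≤ τ
            · rw [indicator_of_mem (show r ∈ Icc 0 τ from ⟨hr.1, h⟩)]
              refine (hb _).trans ?_
              gcongr
              linarith [hr.1]
            · refine (measure_mono ?_).trans (hs.le.trans zero_le)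
              intro s hs' hs''
              simp only [mem_Iic, mem_Icc] at *
              linarith [hs''.1]
        _ ≤ ∫⁻ r, (Icc 0 τ).indicator (fun _ => ENNReal.ofReal τ ^ m) r :=
            lintegral_mono' Measure.restrict_le_self le_rfl
        _ = ENNReal.ofReal τ ^ (m + 1) := by
            rw [lintegral_indicator measurableSet_Icc]
            simp [pow_succ]
    · intro φ hφ hc x v
      rw [Function.iterate_succ_apply', fwdDiff, hf φ hφ hc, hf φ hφ hc,
        integral_conv (integrable_iteratedFDeriv_line hφ hc _ _ _ _),
        ← integral_sub (integrable_iteratedFDeriv_line hφ hc _ _ _ _)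
          (integrable_iteratedFDeriv_line hφ hc _ _ _ _)]
      congr 1; ext s
      have hcont : Continuous fun r : ℝ =>
          iteratedFDeriv ℝ (m + 1) φ (x + s • v + r • v) (fun _ => v) :=
        (continuous_iteratedFDeriv_apply hφ (m + 1) (fun _ => v)).comp (by fun_prop)
      have := intervalIntegral.integral_eq_sub_of_hasDerivAt (a := 0) (b := 1)
        (fun r _ => hasDerivAt_iteratedFDeriv_line hφ m (x + s • v) v r)
        (hcont.intervalIntegrable _ _)
      rw [intervalIntegral.integral_of_le zero_le_one, ← integral_Icc_eq_integral_Ioc] at this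
      simp only [add_smul, ← add_assoc]
      rw [this]
      simp only [one_smul, zero_smul, add_zero]
      congr 2
      abel_nf

/-! ### The averaging identity for weak derivatives -/

/-- Integrability on `K × ℝ` of `(x, t) ↦ G (x + t y)`: since `ν` lives on a bounded interval, only
the values of `G` on the compact set `K + [0, M] y` matter. -/
lemma integrable_shear_restrict {n : ℕ} {G : Euc n → ℝ} (hG : Measurable G)
    (hL : LocallyIntegrable G volume) (ν : Measure ℝ) [IsProbabilityMeasure ν] {M : ℝ}
    (hs : ν (Icc 0 M)ᶜ = 0) (y : Euc n) {K : Set (Euc n)} (hK : IsCompact K) :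
    Integrable (fun p : Euc n × ℝ => G (p.1 + p.2 • y)) ((volume.restrict K).prod ν) := by
  have hm : Measurable (fun p : Euc n × ℝ => G (p.1 + p.2 • y)) := hG.comp (by fun_prop)
  refine ⟨hm.aestronglyMeasurable, ?_⟩
  let K' : Set (Euc n) := (fun p : Euc n × ℝ => p.1 + p.2 • y) '' (K ×ˢ Icc 0 M)
  have hK' : IsCompact K' := (hK.prod isCompact_Icc).image (by fun_prop)
  have hfin : ∫⁻ x in K', ‖G x‖ₑ < ⊤ := (hL.integrableOn_isCompact hK').2
  unfold HasFiniteIntegral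
  rw [lintegral_prod_symm' _ hm.enorm]
  have h1 : ∀ᵐ t ∂ν, t ∈ Icc (0 : ℝ) M := by rw [ae_iff]; exact hs
  refine lt_of_le_of_lt (lintegral_mono_ae (g := fun _ => ∫⁻ x in K', ‖G x‖ₑ) ?_) (by simpa)
  filter_upwards [h1] with t ht
  rw [← lintegral_indicator hK.measurableSet, ← lintegral_indicator hK'.measurableSet,
    ← lintegral_add_right_eq_self (fun x => K'.indicator (fun x => ‖G x‖ₑ) x) (t • y)]
  refine lintegral_mono fun x => ?_
  by_cases hx : x ∈ K
  · rw [indicator_of_mem hx, indicator_of_mem]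
    exact ⟨(x, t), ⟨hx, ht⟩, rfl⟩
  · rw [indicator_of_notMem hx]; exact zero_le

lemma locallyIntegrable_shear {n : ℕ} {G : Euc n → ℝ} (hG : Measurable G)
    (hL : LocallyIntegrable G volume) (ν : Measure ℝ) [IsProbabilityMeasure ν] {M : ℝ}
    (hs : ν (Icc 0 M)ᶜ = 0) (y : Euc n) :
    LocallyIntegrable (fun x => ∫ t, G (x + t • y) ∂ν) volume := by
  rw [locallyIntegrable_iff]
  intro K hK
  exact (integrable_shear_restrict hG hL ν hs y hK).integral_prod_left

lemma integrable_mul_shear {n : ℕ} {G : Euc n → ℝ} (hG : Measurable G)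
    (hL : LocallyIntegrable G volume) (ν : Measure ℝ) [IsProbabilityMeasure ν] {M : ℝ}
    (hs : ν (Icc 0 M)ᶜ = 0) (y : Euc n) {φ : Euc n → ℝ} (hφ : Continuous φ)
    (hc : HasCompactSupport φ) :
    Integrable (fun p : Euc n × ℝ => φ p.1 * G (p.1 + p.2 • y)) (volume.prod ν) := by
  obtain ⟨B, hB⟩ := hφ.bounded_above_of_compact_support hc
  have h := (integrable_shear_restrict hG hL ν hs y hc.isCompact).bdd_mul
    (f := fun p : Euc n × ℝ => φ p.1) (c := B)
    (hφ.comp continuous_fst).aestronglyMeasurable (Eventually.of_forall fun p => hB _)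
  rw [← Measure.restrict_univ (μ := ν), Measure.prod_restrict] at h
  refine (integrableOn_iff_integrable_of_support_subset ?_).1 h
  intro p hp
  refine ⟨subset_tsupport _ fun h0 => hp ?_, mem_univ _⟩
  simp only at h0 ⊢
  rw [h0, zero_mul]

lemma locallyIntegrable_translate {n : ℕ} {G : Euc n → ℝ} (hG : Measurable G)
    (hL : LocallyIntegrable G volume) (k : ℕ) (y : Euc n) :
    LocallyIntegrable (fun x => G (x + k • y)) volume := by
  have := locallyIntegrable_shear hG hL (Measure.dirac (k : ℝ)) (M := k) (by simp) y
  simpa [Nat.cast_smul_eq_nsmul] using this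

lemma integral_translate {n : ℕ} (φ G : Euc n → ℝ) (c : Euc n) :
    ∫ x, φ x * G (x + c) = ∫ x, G x * φ (x - c) := by
  rw [← integral_add_right_eq_self (fun x => G x * φ (x - c)) c]
  simp [mul_comm]

lemma iteratedFDeriv_apply_const {n : ℕ} (φ : Euc n → ℝ) (m : ℕ) (x y : Euc n) :
    iteratedFDeriv ℝ m φ x (fun _ => y) = ∑ a : Fin m → Fin n, (∏ j, y (a j)) *
      iteratedFDeriv ℝ m φ x (fun j => EuclideanSpace.single (a j) 1) := by
  have hy : y = ∑ i, y i • EuclideanSpace.single i (1 : ℝ) := by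
    simpa using ((EuclideanSpace.basisFun (Fin n) ℝ).sum_repr y).symm
  conv_lhs => rw [hy]
  rw [ContinuousMultilinearMap.map_sum]
  refine Finset.sum_congr rfl fun a _ => ?_
  rw [ContinuousMultilinearMap.map_smul_univ, smul_eq_mul]

lemma integrable_mul_iteratedFDeriv_shear {n m : ℕ} {u : Euc n → ℝ} (hu : Measurable u)
    (hL : LocallyIntegrable u volume) (ν : Measure ℝ) [IsProbabilityMeasure ν] {M : ℝ}
    (hs : ν (Icc 0 M)ᶜ = 0) (y : Euc n) {φ : Euc n → ℝ} (hφ : ContDiff ℝ (⊤ : ℕ∞) φ)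
    (hc : HasCompactSupport φ) :
    Integrable (fun p : Euc n × ℝ => u p.1 *
      iteratedFDeriv ℝ m φ (p.1 + p.2 • -y) (fun _ => -y)) (volume.prod ν) := by
  have hcont := continuous_iteratedFDeriv_apply hφ m (fun _ => -y)
  have hcs := hasCompactSupport_iteratedFDeriv_apply hc m (fun _ => -y)
  set ψ := fun x => iteratedFDeriv ℝ m φ x (fun _ => -y) with hψ
  obtain ⟨B, hB⟩ := exists_bound_iteratedFDeriv_apply hφ hc m (fun _ => -y)
  let K' : Set (Euc n) := (fun p : Euc n × ℝ => p.1 + p.2 • y) '' (tsupport ψ ×ˢ Icc 0 M)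
  have hK' : IsCompact K' := (hcs.isCompact.prod isCompact_Icc).image (by fun_prop)
  have h1 : Integrable (K'.indicator fun x => ‖u x‖) :=
    (integrable_indicator_iff hK'.measurableSet).2 (hL.integrableOn_isCompact hK').norm
  refine Integrable.mono' (h1.mul_prod (integrable_const B (μ := ν))) ?_ ?_
  · exact ((hu.comp measurable_fst).mul (hcont.measurable.comp (by fun_prop))).aestronglyMeasurable
  · have h2 : ∀ᵐ t ∂ν, t ∈ Icc (0 : ℝ) M := by rw [ae_iff]; exact hs
    filter_upwards [Measure.quasiMeasurePreserving_snd.ae h2] with p hp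
    by_cases hx : p.1 ∈ K'
    · rw [indicator_of_mem hx, norm_mul]
      exact mul_le_mul_of_nonneg_left (hB _) (norm_nonneg _)
    · have : ψ (p.1 + p.2 • -y) = 0 := by
        by_contra h0
        exact hx ⟨(p.1 + p.2 • -y, p.2), ⟨subset_tsupport _ h0, hp⟩, by simp⟩
      rw [indicator_of_notMem hx]
      simp only [hψ] at this
      rw [this]
      simp

/-- Weak derivatives satisfy the same averaging identity as classical ones: it is tested against
`φ`, the differences and the derivatives being moved to `φ` and back. -/
lemma fwdDiff_ae_eq {n m : ℕ} {u : Euc n → ℝ} {G : (Fin m → Fin n) → Euc n → ℝ}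
    (hu : Measurable u) (huL : LocallyIntegrable u volume)
    (hG : ∀ a, Measurable (G a)) (hGL : ∀ a, LocallyIntegrable (G a) volume)
    (hw : ∀ (a : Fin m → Fin n) (φ : Euc n → ℝ), ContDiff ℝ (⊤ : ℕ∞) φ → HasCompactSupport φ →
      ∫ x, u x * iteratedFDeriv ℝ m φ x (fun j => EuclideanSpace.single (a j) 1)
        = (-1 : ℝ) ^ m * ∫ x, G a x * φ x)
    (ν : Measure ℝ) [IsProbabilityMeasure ν] (hs : ν (Icc 0 (m : ℝ))ᶜ = 0)
    (hν : ∀ φ : Euc n → ℝ, ContDiff ℝ (⊤ : ℕ∞) φ → HasCompactSupport φ → ∀ x v : Euc n,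
      (fwdDiff v)^[m] φ x = ∫ t, iteratedFDeriv ℝ m φ (x + t • v) (fun _ => v) ∂ν)
    (y : Euc n) :
    ∀ᵐ x, (fwdDiff y)^[m] u x =
      ∑ a : Fin m → Fin n, (∏ j, y (a j)) * ∫ t, G a (x + t • y) ∂ν := by
  refine ae_eq_of_integral_contDiff_smul_eq (μ := volume) ?_ ?_ ?_
  · rw [funext (fwdDiff_iter_eq_sum_shift y u m)]
    refine locallyIntegrable_finsetSum _ fun k _ => ?_
    simp only [← Int.cast_smul_eq_zsmul ℝ]
    exact (locallyIntegrable_translate hu huL k y).smul (_ : ℝ)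
  · refine locallyIntegrable_finsetSum _ fun a _ => ?_
    exact (locallyIntegrable_shear (hG a) (hGL a) ν hs y).smul (∏ j, y (a j))
  intro φ hφ hc
  have hshift : ∀ c : Euc n, ContDiff ℝ (⊤ : ℕ∞) (fun x => φ (x - c)) ∧
      HasCompactSupport (fun x => φ (x - c)) := fun c =>
    ⟨hφ.comp (by fun_prop), hc.comp_homeomorph (Homeomorph.subRight c)⟩
  have hint : ∀ c : Euc n, Integrable (fun x => u x * φ (x - c)) := fun c => by
    simpa [mul_comm] using huL.integrable_smul_left_of_hasCompactSupport
      (hshift c).1.continuous (hshift c).2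
  have hint' : ∀ c : Euc n, Integrable (fun x => φ x * u (x + c)) := fun c => by
    simpa [mul_comm] using (hint c).comp_add_right c
  have hL : ∫ x, φ x • (fwdDiff y)^[m] u x = ∫ x, u x * (fwdDiff (-y))^[m] φ x := by
    simp_rw [fwdDiff_iter_eq_sum_shift, smul_eq_mul, Finset.mul_sum,
      ← Int.cast_smul_eq_zsmul ℝ, smul_eq_mul, mul_left_comm _ (((_ : ℤ) : ℝ))]
    rw [integral_finsetSum _ fun k _ => (hint' _).const_mul _, integral_finsetSum]
    · refine Finset.sum_congr rfl fun k _ => ?_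
      rw [integral_const_mul, integral_const_mul, integral_translate]
      simp [sub_eq_add_neg]
    · intro k _
      simpa [sub_eq_add_neg] using (hint (k • y)).const_mul _
  have hR : ∫ x, φ x • (∑ a : Fin m → Fin n, (∏ j, y (a j)) * ∫ t, G a (x + t • y) ∂ν)
      = ∑ a : Fin m → Fin n, (∏ j, y (a j)) * ∫ t, (∫ x, φ x * G a (x + t • y)) ∂ν := by
    have hint2 : ∀ a, Integrable (fun x => φ x * ∫ t, G a (x + t • y) ∂ν) := fun a => by
      simpa using (locallyIntegrable_shear (hG a) (hGL a) ν hs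
        y).integrable_smul_left_of_hasCompactSupport hφ.continuous hc
    simp_rw [smul_eq_mul, Finset.mul_sum, mul_left_comm (φ _)]
    rw [integral_finsetSum _ fun a _ => (hint2 a).const_mul _]
    refine Finset.sum_congr rfl fun a _ => ?_
    rw [integral_const_mul]
    congr 1
    simp_rw [← integral_const_mul]
    exact integral_integral_swap (integrable_mul_shear (hG a) (hGL a) ν hs y hφ.continuous hc)
  rw [hL, hR]
  simp_rw [hν φ hφ hc _ (-y), ← integral_const_mul]
  rw [integral_integral_swap (integrable_mul_iteratedFDeriv_shear hu huL ν hs y hφ hc)]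
  have hinner : ∀ t : ℝ, ∫ x, u x * iteratedFDeriv ℝ m φ (x + t • -y) (fun _ => -y)
      = ∑ a : Fin m → Fin n, (∏ j, y (a j)) * ∫ x, φ x * G a (x + t • y) := by
    intro t
    have ht := hshift (t • y)
    have h1 : ∀ x, iteratedFDeriv ℝ m φ (x + t • -y) (fun _ => -y) =
        ∑ a : Fin m → Fin n, (∏ j, (-y) (a j)) * iteratedFDeriv ℝ m (fun x => φ (x - t • y)) x
          (fun j => EuclideanSpace.single (a j) 1) := by
      intro x
      rw [← iteratedFDeriv_apply_const, iteratedFDeriv_comp_sub, smul_neg, sub_eq_add_neg]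
    have hi : ∀ a : Fin m → Fin n, Integrable (fun x => u x *
        iteratedFDeriv ℝ m (fun x => φ (x - t • y)) x
          (fun j => EuclideanSpace.single (a j) 1)) := fun a => by
      simpa [mul_comm] using huL.integrable_smul_left_of_hasCompactSupport
        (continuous_iteratedFDeriv_apply ht.1 m _) (hasCompactSupport_iteratedFDeriv_apply ht.2 m _)
    simp_rw [h1, Finset.mul_sum, mul_left_comm (u _)]
    rw [integral_finsetSum _ fun a _ => (hi a).const_mul _]
    refine Finset.sum_congr rfl fun a _ => ?_
    rw [integral_const_mul, hw a _ ht.1 ht.2, ← integral_translate, ← mul_assoc]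
    congr 1
    simp only [PiLp.neg_apply, Finset.prod_neg, Finset.card_univ, Fintype.card_fin]
    rw [mul_right_comm, ← mul_pow]
    simp
  simp_rw [hinner]
  rw [integral_finsetSum]
  · simp_rw [integral_const_mul]
  · intro a _
    exact (integrable_mul_shear (hG a) (hGL a) ν hs y hφ.continuous hc).integral_prod_right.const_mul _

/-! ### Riesz potentials and the Lorentz norm -/

/-- The kernel `|z| ^ (m - n)` of the Riesz potential of order `m` (with value `0` at `z = 0`). -/
def rieszWeight (n m : ℕ) (z : Euc n) : ℝ≥0∞ := ENNReal.ofReal (‖z‖ ^ ((m : ℝ) - n))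

lemma measurable_rieszWeight (n m : ℕ) : Measurable (rieszWeight n m) := by
  unfold rieszWeight; fun_prop

lemma lintegral_comp_smul_euc {n : ℕ} {f : Euc n → ℝ≥0∞} (hf : Measurable f) {r : ℝ} (hr : 0 < r) :
    ∫⁻ x, f (r • x) = ENNReal.ofReal (r ^ n)⁻¹ * ∫⁻ x, f x := by
  have h := Measure.map_addHaar_smul (volume : Measure (Euc n)) hr.ne'
  rw [← lintegral_map hf (measurable_const_smul r), h, lintegral_smul_measure, smul_eq_mul,
    finrank_euclideanSpace_fin, abs_of_pos (by positivity)]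

lemma lintegral_rieszWeight_ball_lt_top {n m : ℕ} (hm : 1 ≤ m) (hmn : m < n) :
    ∫⁻ z in Metric.ball (0 : Euc n) 1, rieszWeight n m z < ⊤ := by
  have : Nontrivial (Euc n) := by
    have : Nonempty (Fin n) := ⟨⟨0, by omega⟩⟩
    infer_instance
  have h : IntegrableOn (fun z : Euc n => ‖z‖ ^ ((m : ℝ) - n)) (Metric.ball 0 1) := by
    rw [integrableOn_fun_norm_addHaar volume (f := fun y : ℝ => y ^ ((m : ℝ) - n)),
      finrank_euclideanSpace_fin]
    have h1 : IntegrableOn (fun y : ℝ => y ^ (m - 1)) (Ioo 0 1) :=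
      ((continuous_pow (m - 1)).integrableOn_Icc (a := 0) (b := 1)).mono_set Ioo_subset_Icc_self
    refine h1.congr_fun (fun y hy => ?_) measurableSet_Ioo
    have hy0 : 0 < y := hy.1
    simp only [smul_eq_mul]
    rw [← Real.rpow_natCast, ← Real.rpow_natCast, ← Real.rpow_add hy0]
    congr 1
    rw [Nat.cast_sub hm, Nat.cast_sub (by omega)]
    ring
  have h2 := h.2
  rw [hasFiniteIntegral_iff_ofReal (Eventually.of_forall fun z => by positivity)] at h2
  exact h2

lemma lintegral_rieszWeight_ball {n m : ℕ} {r : ℝ} (hr : 0 < r) :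
    ∫⁻ z in Metric.ball (0 : Euc n) r, rieszWeight n m z =
      ENNReal.ofReal (r ^ (m : ℝ)) * ∫⁻ z in Metric.ball (0 : Euc n) 1, rieszWeight n m z := by
  have hmeas : Measurable ((Metric.ball (0 : Euc n) r).indicator (rieszWeight n m)) :=
    (measurable_rieszWeight n m).indicator measurableSet_ball
  have h := lintegral_comp_smul_euc hmeas hr
  have h1 : ∀ x : Euc n, (Metric.ball (0 : Euc n) r).indicator (rieszWeight n m) (r • x) =
      ENNReal.ofReal (r ^ ((m : ℝ) - n)) *
        (Metric.ball (0 : Euc n) 1).indicator (rieszWeight n m) x := by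
    intro x
    have hiff : r • x ∈ Metric.ball (0 : Euc n) r ↔ x ∈ Metric.ball (0 : Euc n) 1 := by
      simp only [mem_ball_zero_iff, norm_smul, Real.norm_eq_abs, abs_of_pos hr]
      constructor <;> intro h <;> nlinarith
    by_cases hx : x ∈ Metric.ball (0 : Euc n) 1
    · rw [indicator_of_mem hx, indicator_of_mem (hiff.2 hx), rieszWeight, rieszWeight,
        ← ENNReal.ofReal_mul (by positivity), norm_smul, Real.norm_eq_abs, abs_of_pos hr,
        Real.mul_rpow hr.le (norm_nonneg _)]
    · rw [indicator_of_notMem hx, indicator_of_notMem (fun h => hx (hiff.1 h)), mul_zero]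
  simp_rw [h1] at h
  rw [lintegral_const_mul _ ((measurable_rieszWeight n m).indicator measurableSet_ball),
    lintegral_indicator measurableSet_ball, lintegral_indicator measurableSet_ball] at h
  have hrn : (0 : ℝ) < r ^ n := by positivity
  calc ∫⁻ z in Metric.ball (0 : Euc n) r, rieszWeight n m z
      = ENNReal.ofReal (r ^ n) * (ENNReal.ofReal (r ^ n)⁻¹ *
          ∫⁻ z in Metric.ball (0 : Euc n) r, rieszWeight n m z) := by
        rw [← mul_assoc, ← ENNReal.ofReal_mul hrn.le, mul_inv_cancel₀ hrn.ne']; simp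
    _ = _ := by
        rw [← h, ← mul_assoc, ← ENNReal.ofReal_mul hrn.le, ← Real.rpow_natCast r n,
          ← Real.rpow_add hr]
        congr 3; ring

/-- Among sets of given measure, the mass of the Riesz kernel is at most comparable to that of the
centred ball. -/
lemma setLIntegral_rieszWeight_le {n m : ℕ} (hm : 1 ≤ m) (hmn : m < n) {E : Set (Euc n)}
    (hE : MeasurableSet E) :
    ∫⁻ z in E, rieszWeight n m z ≤
      ((∫⁻ z in Metric.ball (0 : Euc n) 1, rieszWeight n m z) + 1) *
        volume E ^ ((m : ℝ) / n) := by
  have hn0 : (0 : ℝ) < n := by exact_mod_cast (by omega : 0 < n)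
  have hm0 : (0 : ℝ) < m := by exact_mod_cast hm
  have hmn' : (m : ℝ) < n := by exact_mod_cast hmn
  have hα : (0 : ℝ) < (m : ℝ) / n := by positivity
  rcases eq_or_ne (volume E) 0 with h0 | h0
  · rw [setLIntegral_measure_zero _ _ h0]; exact zero_le
  rcases eq_or_ne (volume E) ⊤ with htop | htop
  · rw [htop, ENNReal.top_rpow_of_pos hα, ENNReal.mul_top (by simp)]
    exact le_top
  have hV : 0 < (volume E).toReal := ENNReal.toReal_pos h0 htop
  -- the radius for which the ball and `E` have comparable measure
  set r : ℝ := (volume E).toReal ^ (1 / (n : ℝ)) with hr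
  have hr0 : 0 < r := by positivity
  have hVr : volume E = ENNReal.ofReal (r ^ (n : ℝ)) := by
    rw [hr, ← Real.rpow_mul hV.le, one_div, inv_mul_cancel₀ hn0.ne', Real.rpow_one,
      ENNReal.ofReal_toReal htop]
  have hVα : volume E ^ ((m : ℝ) / n) = ENNReal.ofReal (r ^ (m : ℝ)) := by
    rw [hVr, ENNReal.ofReal_rpow_of_pos (by positivity), ← Real.rpow_mul hr0.le,
      mul_div_cancel₀ _ hn0.ne']
  have hout : ∫⁻ z in E \ Metric.ball 0 r, rieszWeight n m z ≤ ENNReal.ofReal (r ^ (m : ℝ)) := by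
    calc ∫⁻ z in E \ Metric.ball 0 r, rieszWeight n m z
        ≤ ∫⁻ z in E \ Metric.ball 0 r, ENNReal.ofReal (r ^ ((m : ℝ) - n)) := by
          refine setLIntegral_mono' (hE.diff measurableSet_ball) fun z hz => ?_
          refine ENNReal.ofReal_le_ofReal (Real.rpow_le_rpow_of_nonpos hr0 ?_ (by linarith))
          simpa using hz.2
      _ ≤ ENNReal.ofReal (r ^ ((m : ℝ) - n)) * volume E := by
          rw [setLIntegral_const]
          gcongr
          exact sdiff_subset
      _ = ENNReal.ofReal (r ^ (m : ℝ)) := by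
          rw [hVr, ← ENNReal.ofReal_mul (by positivity), ← Real.rpow_add hr0]
          congr 2; ring
  calc ∫⁻ z in E, rieszWeight n m z
      ≤ ∫⁻ z in Metric.ball 0 r ∪ E \ Metric.ball 0 r, rieszWeight n m z :=
        lintegral_mono_set (by rw [union_sdiff_self]; exact subset_union_right)
    _ ≤ (∫⁻ z in Metric.ball 0 r, rieszWeight n m z) +
          ∫⁻ z in E \ Metric.ball 0 r, rieszWeight n m z := lintegral_union_le _ _ _
    _ ≤ _ := by
        rw [lintegral_rieszWeight_ball hr0, hVα, add_mul, one_mul, mul_comm]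
        gcongr

/-- In fact `∫_0^V t ^ (α - 1) dt = V ^ α / α`; the cruder bound, obtained from
`t ^ (α - 1) ≥ V ^ (α - 1)`, also covers `V = ∞`. -/
lemma rpow_le_setLIntegral {α : ℝ} (hα0 : 0 < α) (hα1 : α ≤ 1) (V : ℝ≥0∞) :
    V ^ α ≤ ∫⁻ t in Ioi (0 : ℝ), ENNReal.ofReal (t ^ (α - 1)) *
      {t : ℝ | ENNReal.ofReal t < V}.indicator 1 t := by
  set I := ∫⁻ t in Ioi (0 : ℝ), ENNReal.ofReal (t ^ (α - 1)) *
      {t : ℝ | ENNReal.ofReal t < V}.indicator 1 t with hI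
  have key : ∀ T : ℝ, 0 < T → ENNReal.ofReal T ≤ V → ENNReal.ofReal (T ^ α) ≤ I := by
    intro T hT hTV
    calc ENNReal.ofReal (T ^ α) = ∫⁻ t in Ioo 0 T, ENNReal.ofReal (T ^ (α - 1)) := by
          rw [setLIntegral_const, Real.volume_Ioo, ← ENNReal.ofReal_mul (by positivity), sub_zero,
            ← Real.rpow_add_one hT.ne', sub_add_cancel]
      _ ≤ ∫⁻ t in Ioo 0 T, ENNReal.ofReal (t ^ (α - 1)) *
            {t : ℝ | ENNReal.ofReal t < V}.indicator 1 t := by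
          refine setLIntegral_mono' measurableSet_Ioo fun t ht => ?_
          have hmem : t ∈ {t : ℝ | ENNReal.ofReal t < V} :=
            ((ENNReal.ofReal_lt_ofReal_iff hT).2 ht.2).trans_le hTV
          rw [indicator_of_mem hmem, Pi.one_apply, mul_one]
          exact ENNReal.ofReal_le_ofReal
            (Real.rpow_le_rpow_of_nonpos ht.1 ht.2.le (by linarith))
      _ ≤ I := lintegral_mono_set Ioo_subset_Ioi_self
  rcases eq_or_ne V ⊤ with rfl | hV
  · have : I = ⊤ := by
      refine ENNReal.eq_top_of_forall_nnreal_le fun r => ?_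
      rcases eq_or_ne r 0 with rfl | hr
      · simp
      have hr' : 0 < (r : ℝ) := by positivity
      have h := key ((r : ℝ) ^ (1 / α)) (by positivity) le_top
      rwa [← Real.rpow_mul hr'.le, one_div, inv_mul_cancel₀ hα0.ne', Real.rpow_one,
        ENNReal.ofReal_coe_nnreal] at h
    rw [this]; exact le_top
  rcases eq_or_ne V 0 with rfl | h0
  · rw [ENNReal.zero_rpow_of_pos hα0]; exact zero_le
  have hpos := ENNReal.toReal_pos h0 hV
  have h := key V.toReal hpos (ENNReal.ofReal_toReal hV).le
  rwa [← ENNReal.ofReal_rpow_of_pos hpos, ENNReal.ofReal_toReal hV] at h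

lemma volume_le_of_ofReal_le (r : ℝ≥0∞) : volume {l ∈ Ioi (0 : ℝ) | ENNReal.ofReal l ≤ r} ≤ r := by
  rcases eq_or_ne r ⊤ with rfl | hr
  · exact le_top
  calc volume {l ∈ Ioi (0 : ℝ) | ENNReal.ofReal l ≤ r} ≤ volume (Ioc 0 r.toReal) :=
        measure_mono fun l hl => ⟨hl.1, (ENNReal.ofReal_le_iff_le_toReal hr).1 hl.2⟩
    _ = r := by rw [Real.volume_Ioc, sub_zero, ENNReal.ofReal_toReal hr]

/-- The Lorentz functional dominates the corresponding integral of the distribution function. -/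
lemma lintegral_distribution_le_lorentzNorm {n m : ℕ} (hm : 1 ≤ m) (hmn : m < n) (f : Euc n → ℝ) :
    ∫⁻ l in Ioi (0 : ℝ), volume {x | l < |f x|} ^ ((m : ℝ) / n) ≤
      lorentzNorm volume ((n : ℝ) / m) 1 f := by
  have hn0 : (0 : ℝ) < n := by exact_mod_cast (by omega : 0 < n)
  have hm0 : (0 : ℝ) < m := by exact_mod_cast hm
  have hα0 : (0 : ℝ) < (m : ℝ) / n := by positivity
  have hα1 : (m : ℝ) / n ≤ 1 := by
    rw [div_le_one hn0]; exact_mod_cast hmn.le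
  set V : ℝ → ℝ≥0∞ := fun l => volume {x | l < |f x|} with hV
  have hVm : Measurable V := by
    refine Antitone.measurable fun l l' h => measure_mono fun x hx => ?_
    exact lt_of_le_of_lt h hx
  have hset : MeasurableSet {p : ℝ × ℝ | ENNReal.ofReal p.2 < V p.1} :=
    measurableSet_lt (by fun_prop) (by fun_prop)
  have hr : ∀ t, ∫⁻ l in Ioi (0 : ℝ), {t : ℝ | ENNReal.ofReal t < V l}.indicator 1 t ≤
      rearr volume f t := by
    intro t
    have hs : MeasurableSet {l : ℝ | ENNReal.ofReal t < V l} :=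
      measurableSet_lt measurable_const hVm
    have h1 : ∀ l : ℝ, {t : ℝ | ENNReal.ofReal t < V l}.indicator (1 : ℝ → ℝ≥0∞) t =
        {l : ℝ | ENNReal.ofReal t < V l}.indicator 1 l := fun l => by simp [indicator]
    simp_rw [h1]
    rw [lintegral_indicator_one hs, Measure.restrict_apply hs]
    refine (measure_mono ?_).trans (volume_le_of_ofReal_le _)
    rintro l ⟨hl1, hl2⟩
    refine ⟨hl2, le_sInf fun l' hl' => ?_⟩
    by_contra! hlt
    refine absurd (hl1 : ENNReal.ofReal t < V l) (not_lt.2 (le_trans (measure_mono ?_) hl'))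
    intro x hx
    refine hlt.trans ?_
    have hx' : l < |f x| := hx
    exact (ENNReal.ofReal_lt_ofReal_iff ((show (0 : ℝ) < l from hl2).trans hx')).2 hx'
  have hexp : (1 : ℝ) / ((n : ℝ) / m) - 1 / 1 = (m : ℝ) / n - 1 := by
    rw [one_div_div, div_one]
  calc ∫⁻ l in Ioi (0 : ℝ), V l ^ ((m : ℝ) / n)
      ≤ ∫⁻ l in Ioi (0 : ℝ), ∫⁻ t in Ioi (0 : ℝ), ENNReal.ofReal (t ^ ((m : ℝ) / n - 1)) *
          {t : ℝ | ENNReal.ofReal t < V l}.indicator 1 t :=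
        lintegral_mono fun l => rpow_le_setLIntegral hα0 hα1 _
    _ = ∫⁻ t in Ioi (0 : ℝ), ∫⁻ l in Ioi (0 : ℝ), ENNReal.ofReal (t ^ ((m : ℝ) / n - 1)) *
          {t : ℝ | ENNReal.ofReal t < V l}.indicator 1 t := by
        refine lintegral_lintegral_swap (Measurable.aemeasurable ?_)
        have : Measurable ({p : ℝ × ℝ | ENNReal.ofReal p.2 < V p.1}.indicator
          (1 : ℝ × ℝ → ℝ≥0∞)) := measurable_one.indicator hset
        exact (Measurable.mul (by fun_prop) this : Measurable fun p : ℝ × ℝ =>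
          ENNReal.ofReal (p.2 ^ ((m : ℝ) / n - 1)) *
            {p : ℝ × ℝ | ENNReal.ofReal p.2 < V p.1}.indicator (1 : ℝ × ℝ → ℝ≥0∞) p)
    _ ≤ ∫⁻ t in Ioi (0 : ℝ), ENNReal.ofReal (t ^ ((m : ℝ) / n - 1)) * rearr volume f t := by
        refine lintegral_mono fun t => ?_
        rw [lintegral_const_mul' _ _ ENNReal.ofReal_ne_top]
        gcongr
        exact hr t
    _ = lorentzNorm volume ((n : ℝ) / m) 1 f := by
        simp [lorentzNorm]

/-- The Riesz potential of order `m` of `|f|` is bounded by the Lorentz norm of `f`. -/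
lemma riesz_potential_le {n m : ℕ} (hm : 1 ≤ m) (hmn : m < n) {f : Euc n → ℝ} (hf : Measurable f)
    (x : Euc n) :
    ∫⁻ z, ENNReal.ofReal |f (x + z)| * rieszWeight n m z ≤
      ((∫⁻ z in Metric.ball (0 : Euc n) 1, rieszWeight n m z) + 1) *
        lorentzNorm volume ((n : ℝ) / m) 1 f := by
  have hfx : Measurable fun z => |f (x + z)| :=
    (hf.comp (measurable_const_add x)).norm
  have hset : ∀ l : ℝ, MeasurableSet {z | l < |f (x + z)|} := fun l =>
    measurableSet_lt measurable_const hfx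
  have hw : Measurable (rieszWeight n m) := measurable_rieszWeight n m
  calc ∫⁻ z, ENNReal.ofReal |f (x + z)| * rieszWeight n m z
      = ∫⁻ z, ENNReal.ofReal |f (x + z)| ∂(volume.withDensity (rieszWeight n m)) := by
        rw [lintegral_withDensity_eq_lintegral_mul _ hw (by fun_prop)]
        simp [mul_comm]
    _ = ∫⁻ l in Ioi (0 : ℝ), volume.withDensity (rieszWeight n m) {z | l < |f (x + z)|} :=
        lintegral_eq_lintegral_meas_lt _ (Eventually.of_forall fun z => abs_nonneg _)
          hfx.aemeasurable
    _ ≤ ∫⁻ l in Ioi (0 : ℝ), ((∫⁻ z in Metric.ball (0 : Euc n) 1, rieszWeight n m z) + 1) *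
          volume {x | l < |f x|} ^ ((m : ℝ) / n) := by
        refine lintegral_mono fun l => ?_
        rw [withDensity_apply _ (hset l)]
        refine (setLIntegral_rieszWeight_le hm hmn (hset l)).trans_eq ?_
        congr 2
        exact measure_preimage_add volume x {x | l < |f x|}
    _ ≤ _ := by
        rw [lintegral_const_mul' _ _
          (ENNReal.add_ne_top.2 ⟨(lintegral_rieszWeight_ball_lt_top hm hmn).ne, by simp⟩)]
        gcongr
        exact lintegral_distribution_le_lorentzNorm hm hmn f

/-! ### Averages over annuli -/

/-- The open annulus `R < |y| < 2R` centred at the origin. -/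
def annulus (n : ℕ) (R : ℝ) : Set (Euc n) := {y | R < ‖y‖ ∧ ‖y‖ < 2 * R}

lemma isOpen_annulus (n : ℕ) (R : ℝ) : IsOpen (annulus n R) :=
  (isOpen_lt continuous_const continuous_norm).inter (isOpen_lt continuous_norm continuous_const)

lemma mem_annulus_smul {n : ℕ} {R r : ℝ} (hr : 0 < r) (y : Euc n) :
    r • y ∈ annulus n (r * R) ↔ y ∈ annulus n R := by
  simp only [annulus, mem_ofPred_eq, norm_smul, Real.norm_eq_abs, abs_of_pos hr]
  rw [mul_left_comm, mul_lt_mul_iff_right₀ hr, mul_lt_mul_iff_right₀ hr]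

lemma volume_annulus {n : ℕ} {R : ℝ} (hR : 0 < R) :
    volume (annulus n R) = ENNReal.ofReal (R ^ n) * volume (annulus n 1) := by
  have h := Measure.addHaar_preimage_smul (volume : Measure (Euc n)) hR.ne' (annulus n R)
  have h1 : (fun x : Euc n => R • x) ⁻¹' annulus n R = annulus n 1 := by
    ext y; simpa using mem_annulus_smul (R := 1) hR y
  rw [h1, finrank_euclideanSpace_fin, abs_of_pos (by positivity)] at h
  rw [h, ← mul_assoc, ← ENNReal.ofReal_mul (by positivity), mul_inv_cancel₀ (by positivity)]
  simp

lemma volume_annulus_pos {n : ℕ} (hn : 0 < n) : 0 < volume (annulus n 1) := by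
  refine (isOpen_annulus n 1).measure_pos _ ⟨EuclideanSpace.single ⟨0, hn⟩ (3 / 2 : ℝ), ?_⟩
  simp only [annulus, mem_ofPred_eq, PiLp.norm_single]
  norm_num

lemma volume_annulus_lt_top (n : ℕ) : volume (annulus n 1) < ⊤ := by
  refine (measure_mono ?_).trans_lt (measure_ball_lt_top (x := (0 : Euc n)) (r := 2))
  intro y hy
  simpa [annulus] using hy.2

/-- Averaging over lines and then over an annulus produces the Riesz potential, thanks to the decay
`τ ^ m` of the averaging measure near the origin. -/
lemma setLIntegral_annulus_le {n m : ℕ} (hm : 1 ≤ m) {F : Euc n → ℝ≥0∞} (hF : Measurable F)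
    (ν : Measure ℝ) [IsProbabilityMeasure ν] (hb : ∀ τ : ℝ, ν (Iic τ) ≤ ENNReal.ofReal τ ^ m)
    {R : ℝ} (hR : 0 < R) (x : Euc n) :
    ∫⁻ y in annulus n R, ∫⁻ t, F (x + t • y) ∂ν ≤
      ENNReal.ofReal (2 ^ n * R ^ ((n : ℝ) - m)) * ∫⁻ z, F (x + z) * rieszWeight n m z := by
  have hA : ∀ R, MeasurableSet (annulus n R) := fun R => (isOpen_annulus n R).measurableSet
  have hpos : ∀ᵐ t ∂ν, 0 < t := by
    rw [ae_iff]
    have h0 := hb 0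
    rw [ENNReal.ofReal_zero, zero_pow (by omega)] at h0
    simp only [not_lt]
    exact le_antisymm h0 zero_le
  have hset : MeasurableSet {p : ℝ × Euc n | p.2 ∈ annulus n (p.1 * R)} :=
    (measurableSet_lt (f := fun p : ℝ × Euc n => p.1 * R) (g := fun p => ‖p.2‖)
      (by fun_prop) (by fun_prop)).inter
      (measurableSet_lt (f := fun p : ℝ × Euc n => ‖p.2‖) (g := fun p => 2 * (p.1 * R))
        (by fun_prop) (by fun_prop))
  -- the inner integral for fixed `t`, after the substitution `z = t y`
  have hinner : ∀ t : ℝ, 0 < t → ∫⁻ y in annulus n R, F (x + t • y) =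
      ∫⁻ z, ENNReal.ofReal (t ^ n)⁻¹ *
        ({p : ℝ × Euc n | p.2 ∈ annulus n (p.1 * R)}.indicator 1 (t, z) * F (x + z)) := by
    intro t ht
    have hms : Measurable ((annulus n (t * R)).indicator fun z => F (x + z)) :=
      (hF.comp (measurable_const_add x)).indicator (hA _)
    rw [lintegral_const_mul' _ _ ENNReal.ofReal_ne_top, ← lintegral_indicator (hA R)]
    have h1 : ∀ y, (annulus n R).indicator (fun y => F (x + t • y)) y =
        (annulus n (t * R)).indicator (fun z => F (x + z)) (t • y) := by
      intro y
      by_cases hy : y ∈ annulus n R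
      · rw [indicator_of_mem hy, indicator_of_mem ((mem_annulus_smul ht y).2 hy)]
      · rw [indicator_of_notMem hy, indicator_of_notMem fun h => hy ((mem_annulus_smul ht y).1 h)]
    simp_rw [h1]
    rw [lintegral_comp_smul_euc hms ht]
    congr 2; ext z
    by_cases hz : z ∈ annulus n (t * R) <;> simp [indicator, hz]
  have hker : ∀ z : Euc n, ∫⁻ t, ENNReal.ofReal (t ^ n)⁻¹ *
        {p : ℝ × Euc n | p.2 ∈ annulus n (p.1 * R)}.indicator 1 (t, z) ∂ν ≤
      ENNReal.ofReal (2 ^ n * R ^ ((n : ℝ) - m)) * rieszWeight n m z := by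
    intro z
    rcases eq_or_ne z 0 with rfl | hz
    · refine (lintegral_eq_zero_of_ae_eq_zero ?_).le.trans zero_le
      filter_upwards [hpos] with t ht
      rw [indicator_of_notMem]
      · simp
      · simp only [annulus, mem_ofPred_eq, norm_zero, not_and]
        intro h; nlinarith
    have hz0 : 0 < ‖z‖ := norm_pos_iff.2 hz
    calc ∫⁻ t, ENNReal.ofReal (t ^ n)⁻¹ *
          {p : ℝ × Euc n | p.2 ∈ annulus n (p.1 * R)}.indicator 1 (t, z) ∂ν
        ≤ ∫⁻ t, (Iic (‖z‖ / R)).indicator (fun _ => ENNReal.ofReal ((2 * R / ‖z‖) ^ n)) t ∂ν := by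
          refine lintegral_mono_ae ?_
          filter_upwards [hpos] with t ht
          by_cases hmem : z ∈ annulus n (t * R)
          · have h1 : t ≤ ‖z‖ / R := by rw [le_div_iff₀ hR]; exact hmem.1.le
            rw [indicator_of_mem (by exact hmem), indicator_of_mem (mem_Iic.2 h1), Pi.one_apply,
              mul_one, ← inv_pow]
            refine ENNReal.ofReal_le_ofReal (pow_le_pow_left₀ (by positivity) ?_ _)
            rw [inv_eq_one_div, div_le_div_iff₀ ht hz0]
            nlinarith [hmem.2]
          · rw [indicator_of_notMem (by exact hmem), mul_zero]; exact zero_le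
      _ = ENNReal.ofReal ((2 * R / ‖z‖) ^ n) * ν (Iic (‖z‖ / R)) := by
          rw [lintegral_indicator measurableSet_Iic, setLIntegral_const]
      _ ≤ ENNReal.ofReal ((2 * R / ‖z‖) ^ n) * ENNReal.ofReal (‖z‖ / R) ^ m := by
          gcongr; exact hb _
      _ = ENNReal.ofReal (2 ^ n * R ^ ((n : ℝ) - m)) * rieszWeight n m z := by
          rw [rieszWeight, ← ENNReal.ofReal_pow (by positivity),
            ← ENNReal.ofReal_mul (by positivity), ← ENNReal.ofReal_mul (by positivity),
            Real.rpow_sub hR, Real.rpow_sub hz0]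
          simp only [Real.rpow_natCast, div_pow, mul_pow]
          congr 1
          field_simp
  calc ∫⁻ y in annulus n R, ∫⁻ t, F (x + t • y) ∂ν
      = ∫⁻ t, ∫⁻ y in annulus n R, F (x + t • y) ∂volume ∂ν := by
        refine lintegral_lintegral_swap (Measurable.aemeasurable ?_)
        exact hF.comp (by fun_prop : Measurable fun p : Euc n × ℝ => x + p.2 • p.1)
    _ = ∫⁻ t, ∫⁻ z, ENNReal.ofReal (t ^ n)⁻¹ *
        ({p : ℝ × Euc n | p.2 ∈ annulus n (p.1 * R)}.indicator 1 (t, z) * F (x + z)) ∂volume ∂ν := by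
        refine lintegral_congr_ae ?_
        filter_upwards [hpos] with t ht using hinner t ht
    _ = ∫⁻ z, ∫⁻ t, ENNReal.ofReal (t ^ n)⁻¹ *
        ({p : ℝ × Euc n | p.2 ∈ annulus n (p.1 * R)}.indicator 1 (t, z) * F (x + z)) ∂ν := by
        refine lintegral_lintegral_swap (Measurable.aemeasurable ?_)
        have h1 : Measurable ({p : ℝ × Euc n | p.2 ∈ annulus n (p.1 * R)}.indicator
          (1 : ℝ × Euc n → ℝ≥0∞)) := measurable_one.indicator hset
        exact Measurable.mul (by fun_prop) (h1.mul (hF.comp (by fun_prop)))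
    _ = ∫⁻ z, (∫⁻ t, ENNReal.ofReal (t ^ n)⁻¹ *
        {p : ℝ × Euc n | p.2 ∈ annulus n (p.1 * R)}.indicator 1 (t, z) ∂ν) * F (x + z) := by
        refine lintegral_congr fun z => ?_
        simp_rw [← mul_assoc]
        refine lintegral_mul_const _ (Measurable.mul (by fun_prop) ?_)
        exact ((measurable_one.indicator hset : Measurable
          ({p : ℝ × Euc n | p.2 ∈ annulus n (p.1 * R)}.indicator (1 : ℝ × Euc n → ℝ≥0∞)))).comp
            measurable_prodMk_right
    _ ≤ ∫⁻ z, ENNReal.ofReal (2 ^ n * R ^ ((n : ℝ) - m)) * (F (x + z) * rieszWeight n m z) := by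
        refine lintegral_mono fun z => ?_
        rw [mul_left_comm, ← mul_comm (F (x + z))]
        gcongr
        exact hker z
    _ = _ := lintegral_const_mul' _ _ ENNReal.ofReal_ne_top

/-! ### The uniform bound -/

/-- The `m`-th difference is `±u(x)` plus a combination of the values `u(x + k y)`, `1 ≤ k ≤ m`. -/
lemma enorm_le_of_fwdDiff {n m : ℕ} (u : Euc n → ℝ) (x y : Euc n) :
    ‖u x‖ₑ ≤ (∑ k ∈ Finset.range m, (m.choose (k + 1) : ℝ≥0∞) * ‖u (x + (k + 1 : ℕ) • y)‖ₑ) +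
      ‖(fwdDiff y)^[m] u x‖ₑ := by
  have h := fwdDiff_iter_eq_sum_shift y u m x
  rw [Finset.sum_range_succ'] at h
  simp only [← Int.cast_smul_eq_zsmul ℝ, smul_eq_mul] at h
  push_cast at h
  simp only [zero_smul, add_zero, Nat.choose_zero_right, Nat.cast_one, mul_one, Nat.sub_zero] at h
  have h2 : ‖u x‖ₑ = ‖(-1 : ℝ) ^ m * u x‖ₑ := by simp [enorm_mul]
  rw [h2, eq_sub_of_add_eq' h.symm]
  refine (enorm_sub_le).trans ?_
  rw [add_comm]
  gcongr
  refine (enorm_sum_le _ _).trans (Finset.sum_le_sum fun k _ => ?_)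
  rw [enorm_mul, enorm_mul, enorm_pow, enorm_neg, enorm_one, one_pow, one_mul]
  refine le_of_eq ?_
  congr 1
  rw [← ofReal_norm]; simp

lemma enorm_sum_directional_le {n m : ℕ} {G : (Fin m → Fin n) → Euc n → ℝ}
    (hG : ∀ a, Measurable (G a)) (ν : Measure ℝ) (x y : Euc n) :
    ‖∑ a : Fin m → Fin n, (∏ j, y (a j)) * ∫ t, G a (x + t • y) ∂ν‖ₑ ≤
      ‖y‖ₑ ^ m * ∫⁻ t, ENNReal.ofReal |(∑ a, |G a (x + t • y)|)| ∂ν := by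
  have h1 : ∀ z, ENNReal.ofReal |(∑ a, |G a z|)| = ∑ a, ‖G a z‖ₑ := by
    intro z
    rw [abs_of_nonneg (Finset.sum_nonneg fun a _ => abs_nonneg _),
      ENNReal.ofReal_sum_of_nonneg fun a _ => abs_nonneg _]
    simp [← ofReal_norm]
  simp_rw [h1]
  rw [lintegral_finsetSum (f := fun a t => ‖G a (x + t • y)‖ₑ) _
    fun a _ => ((hG a).comp (by fun_prop : Measurable fun t : ℝ => x + t • y)).enorm,
    Finset.mul_sum]
  refine (enorm_sum_le _ _).trans (Finset.sum_le_sum fun a _ => ?_)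
  rw [enorm_mul]
  refine mul_le_mul' ?_ (enorm_integral_le_lintegral_enorm _)
  rw [← ofReal_norm, ← ofReal_norm, ← ENNReal.ofReal_pow (norm_nonneg _),
    norm_prod]
  refine ENNReal.ofReal_le_ofReal ?_
  calc ∏ j, ‖y (a j)‖ ≤ ∏ _j : Fin m, ‖y‖ :=
        Finset.prod_le_prod (fun _ _ => norm_nonneg _) fun j _ => PiLp.norm_apply_le y (a j)
    _ = ‖y‖ ^ m := by simp

/-- The substitution `z = x + (k + 1) y` has Jacobian `(k + 1) ^ n ≥ 1`. -/
lemma volume_superlevel_translate_le {n : ℕ} (u : Euc n → ℝ) (lam : ℝ) (x : Euc n) (k : ℕ) :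
    volume {y | lam < |u (x + (k + 1 : ℕ) • y)|} ≤ volume {y | lam < |u y|} := by
  have hk : (0 : ℝ) < ((k + 1 : ℕ) : ℝ) := by positivity
  have h := Measure.addHaar_preimage_smul (volume : Measure (Euc n)) hk.ne'
    ((fun z => x + z) ⁻¹' {y | lam < |u y|})
  rw [measure_preimage_add] at h
  have h2 : (fun y : Euc n => ((k + 1 : ℕ) : ℝ) • y) ⁻¹'
      ((fun z => x + z) ⁻¹' {y | lam < |u y|}) = {y | lam < |u (x + (k + 1 : ℕ) • y)|} := by
    ext y; simp only [mem_preimage, mem_ofPred_eq, Nat.cast_smul_eq_nsmul]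
  rw [h2] at h
  rw [h]
  refine mul_le_of_le_one_left zero_le ?_
  rw [← ENNReal.ofReal_one]
  refine ENNReal.ofReal_le_ofReal ?_
  rw [abs_of_pos (by positivity)]
  refine inv_le_one_of_one_le₀ (one_le_pow₀ ?_)
  push_cast; linarith [(Nat.cast_nonneg k : (0 : ℝ) ≤ k)]

/-- The averaging step: the difference inequality at `x` is integrated over those directions `y`
of a large annulus for which all the values `u (x + k y)`, `1 ≤ k ≤ m`, are at most `lam`. By the
decay of `u` these directions fill at least half of the annulus. -/
lemma enorm_le_of_ae_line {n m : ℕ} (hm : 1 ≤ m) (hmn : m < n) {u : Euc n → ℝ} (hu : Measurable u)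
    {F : Euc n → ℝ≥0∞} (hF : Measurable F) (ν : Measure ℝ) [IsProbabilityMeasure ν]
    (hb : ∀ τ : ℝ, ν (Iic τ) ≤ ENNReal.ofReal τ ^ m) {lam : ℝ}
    (hdec : volume {x : Euc n | lam < |u x|} < ⊤) (x : Euc n)
    (hx : ∀ᵐ y, ‖u x‖ₑ ≤
      (∑ k ∈ Finset.range m, (m.choose (k + 1) : ℝ≥0∞) * ‖u (x + (k + 1 : ℕ) • y)‖ₑ) +
      ‖y‖ₑ ^ m * ∫⁻ t, F (x + t • y) ∂ν) :
    ‖u x‖ₑ ≤ (∑ k ∈ Finset.range m, (m.choose (k + 1) : ℝ≥0∞)) * ENNReal.ofReal lam +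
      (ENNReal.ofReal (2 ^ (m + n + 1)) / volume (annulus n 1)) *
        ∫⁻ z, F (x + z) * rieszWeight n m z := by
  have hn : 0 < n := by omega
  set c₀ := volume (annulus n 1) with hc₀
  have hc0 : c₀ ≠ 0 := (volume_annulus_pos hn).ne'
  have hct : c₀ ≠ ⊤ := (volume_annulus_lt_top n).ne
  set E := volume {x : Euc n | lam < |u x|} with hE
  set P := ∫⁻ z, F (x + z) * rieszWeight n m z with hP
  -- the radius is chosen so that the bad directions occupy at most half of the annulus
  have hQ : 2 * (m * E) / c₀ ≠ ⊤ :=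
    ENNReal.div_ne_top (ENNReal.mul_ne_top (by simp) (ENNReal.mul_ne_top (by simp) hdec.ne)) hc0
  set R : ℝ := 1 + (2 * (m * E) / c₀).toReal with hR
  have hR1 : 1 ≤ R := by rw [hR]; linarith [ENNReal.toReal_nonneg (a := 2 * (m * E) / c₀)]
  have hR0 : 0 < R := by linarith
  have hvol : volume (annulus n R) = ENNReal.ofReal (R ^ n) * c₀ := volume_annulus hR0
  set B : Set (Euc n) := ⋃ k ∈ Finset.range m, {y | lam < |u (x + (k + 1 : ℕ) • y)|} with hB
  have hBm : MeasurableSet B := Finset.measurableSet_biUnion _ fun k _ =>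
    measurableSet_lt measurable_const (hu.comp (by fun_prop)).norm
  have hBE : volume B ≤ m * E := by
    refine (measure_biUnion_finset_le _ _).trans ?_
    refine (Finset.sum_le_sum fun k _ => volume_superlevel_translate_le u lam x k).trans ?_
    simp [hE]
  have hhalf : m * E ≤ volume (annulus n R) / 2 := by
    rw [ENNReal.le_div_iff_mul_le (by simp) (by simp), mul_comm, hvol]
    calc 2 * (m * E) = (2 * (m * E) / c₀) * c₀ := (ENNReal.div_mul_cancel hc0 hct).symm
      _ ≤ ENNReal.ofReal (R ^ n) * c₀ := by
        gcongr
        rw [← ENNReal.ofReal_toReal hQ]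
        refine ENNReal.ofReal_le_ofReal ?_
        calc (2 * (m * E) / c₀).toReal ≤ R := by rw [hR]; linarith
          _ ≤ R ^ n := le_self_pow₀ hR1 hn.ne'
  have hAtop : volume (annulus n R) ≠ ⊤ := by
    rw [hvol]; exact ENNReal.mul_ne_top ENNReal.ofReal_ne_top hct
  set S : Set (Euc n) := annulus n R \ B with hS
  have hSm : MeasurableSet S := (isOpen_annulus n R).measurableSet.diff hBm
  have hSvol : ENNReal.ofReal (R ^ n) * c₀ / 2 ≤ volume S := by
    rw [← hvol]
    calc volume (annulus n R) / 2 = volume (annulus n R) - volume (annulus n R) / 2 :=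
          (ENNReal.sub_half hAtop).symm
      _ ≤ volume (annulus n R) - volume B := tsub_le_tsub_left (hBE.trans hhalf) _
      _ ≤ volume S := le_measure_sdiff
  have hS0 : volume S ≠ 0 := by
    refine fun h => absurd (hSvol.trans h.le) (not_le.2 (ENNReal.div_pos ?_ (by simp)))
    exact mul_ne_zero (by simpa using pow_pos hR0 n) hc0
  have hStop : volume S ≠ ⊤ := measure_ne_top_of_subset sdiff_subset hAtop
  set κ : ℝ≥0∞ := ∑ k ∈ Finset.range m, (m.choose (k + 1) : ℝ≥0∞) with hκ
  have hmain : volume S * ‖u x‖ₑ ≤ volume S * (κ * ENNReal.ofReal lam) +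
      ENNReal.ofReal ((2 * R) ^ m) * ∫⁻ y in annulus n R, ∫⁻ t, F (x + t • y) ∂ν := by
    calc volume S * ‖u x‖ₑ = ∫⁻ y in S, ‖u x‖ₑ := by rw [setLIntegral_const, mul_comm]
      _ ≤ ∫⁻ y in S, (κ * ENNReal.ofReal lam +
            ENNReal.ofReal ((2 * R) ^ m) * ∫⁻ t, F (x + t • y) ∂ν) := by
          refine setLIntegral_mono_ae' hSm ?_
          filter_upwards [hx] with y hy hyS
          refine hy.trans (add_le_add ?_ ?_)
          · rw [hκ, Finset.sum_mul]
            refine Finset.sum_le_sum fun k hk => ?_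
            gcongr
            rw [← ofReal_norm]
            refine ENNReal.ofReal_le_ofReal (not_lt.1 fun h => hyS.2 ?_)
            exact mem_iUnion₂.2 ⟨k, hk, h⟩
          · gcongr
            rw [← ofReal_norm, ← ENNReal.ofReal_pow (norm_nonneg _)]
            exact ENNReal.ofReal_le_ofReal
              (pow_le_pow_left₀ (norm_nonneg _) hyS.1.2.le _)
      _ = volume S * (κ * ENNReal.ofReal lam) +
            ENNReal.ofReal ((2 * R) ^ m) * ∫⁻ y in S, ∫⁻ t, F (x + t • y) ∂ν := by
          rw [lintegral_add_left measurable_const, setLIntegral_const, mul_comm,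
            lintegral_const_mul' _ _ ENNReal.ofReal_ne_top]
      _ ≤ _ := by
          gcongr
          exact sdiff_subset (s := annulus n R) (t := B)
  refine (ENNReal.mul_le_mul_iff_right hS0 hStop).1 (hmain.trans ?_)
  rw [mul_add (volume S)]
  refine add_le_add le_rfl ?_
  calc ENNReal.ofReal ((2 * R) ^ m) * ∫⁻ y in annulus n R, ∫⁻ t, F (x + t • y) ∂ν
      ≤ ENNReal.ofReal ((2 * R) ^ m) * (ENNReal.ofReal (2 ^ n * R ^ ((n : ℝ) - m)) * P) := by
        gcongr
        exact setLIntegral_annulus_le hm hF ν hb hR0 x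
    _ = ENNReal.ofReal (R ^ n * 2 ^ (m + n)) * P := by
        rw [← mul_assoc, ← ENNReal.ofReal_mul (by positivity), Real.rpow_sub hR0]
        simp only [Real.rpow_natCast, mul_pow]
        congr 2
        field_simp
        ring
    _ = (ENNReal.ofReal (R ^ n) * c₀ / 2) * (ENNReal.ofReal (2 ^ (m + n + 1)) / c₀ * P) := by
        rw [← mul_assoc]
        congr 1
        have h2 : ENNReal.ofReal (2 ^ (m + n + 1)) = 2 * ENNReal.ofReal (2 ^ (m + n)) := by
          rw [pow_succ, mul_comm, ENNReal.ofReal_mul (by norm_num)]; simp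
        rw [h2, ENNReal.ofReal_mul (by positivity), div_eq_mul_inv, div_eq_mul_inv]
        calc ENNReal.ofReal (R ^ n) * ENNReal.ofReal (2 ^ (m + n))
            = ENNReal.ofReal (R ^ n) * ENNReal.ofReal (2 ^ (m + n)) * (c₀ * c₀⁻¹) *
              ((2 : ℝ≥0∞)⁻¹ * 2) := by
              rw [ENNReal.mul_inv_cancel hc0 hct, ENNReal.inv_mul_cancel (by simp) (by simp)]
              simp
          _ = _ := by ring
    _ ≤ _ := by gcongr

lemma lorentzNorm_congr_ae {n : ℕ} (p q : ℝ) {f g : Euc n → ℝ} (h : f =ᵐ[volume] g) :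
    lorentzNorm volume p q f = lorentzNorm volume p q g := by
  have : ∀ t, rearr volume f t = rearr volume g t := by
    intro t
    unfold rearr rearrE
    congr 1; ext l
    simp only [mem_ofPred_eq]
    have hm : volume {x | l < ENNReal.ofReal |f x|} = volume {x | l < ENNReal.ofReal |g x|} := by
      refine measure_congr ?_
      filter_upwards [h] with x hx
      change (l < ENNReal.ofReal |f x|) = (l < ENNReal.ofReal |g x|)
      rw [hx]
    rw [hm]
  unfold lorentzNorm
  simp_rw [this]

/-- The estimate for measurable representatives of `u` and of its derivatives. The bound of
`enorm_le_of_ae_line` is used for every `lam > 0`, its constants being independent of `lam`, and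
`lam` tends to `0`. -/
lemma ae_enorm_le_lorentzNorm {n m : ℕ} (hm : 1 ≤ m) (hmn : m < n) {u : Euc n → ℝ}
    {G : (Fin m → Fin n) → Euc n → ℝ}
    (hu : Measurable u) (huL : LocallyIntegrable u volume)
    (hG : ∀ a, Measurable (G a)) (hGL : ∀ a, LocallyIntegrable (G a) volume)
    (hw : ∀ (a : Fin m → Fin n) (φ : Euc n → ℝ), ContDiff ℝ (⊤ : ℕ∞) φ → HasCompactSupport φ →
      ∫ x, u x * iteratedFDeriv ℝ m φ x (fun j => EuclideanSpace.single (a j) 1)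
        = (-1 : ℝ) ^ m * ∫ x, G a x * φ x)
    (hdec : ∀ lam : ℝ, 0 < lam → volume {x : Euc n | lam < |u x|} < ⊤) :
    ∀ᵐ x, ‖u x‖ₑ ≤ (ENNReal.ofReal (2 ^ (m + n + 1)) / volume (annulus n 1)) *
      (((∫⁻ z in Metric.ball (0 : Euc n) 1, rieszWeight n m z) + 1) *
        lorentzNorm volume ((n : ℝ) / m) 1 fun x => ∑ a, |G a x|) := by
  obtain ⟨ν, hν, hs, hb, hf⟩ := exists_averaging_measure (n := n) m
  set f : Euc n → ℝ := fun x => ∑ a, |G a x| with hfdef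
  have hfm : Measurable f := Finset.measurable_fun_sum _ fun a _ => (hG a).norm
  have hF : Measurable fun x => ENNReal.ofReal |f x| := hfm.norm.ennreal_ofReal
  have hline : ∀ y, ∀ᵐ x, ‖u x‖ₑ ≤
      (∑ k ∈ Finset.range m, (m.choose (k + 1) : ℝ≥0∞) * ‖u (x + (k + 1 : ℕ) • y)‖ₑ) +
      ‖y‖ₑ ^ m * ∫⁻ t, ENNReal.ofReal |f (x + t • y)| ∂ν := by
    intro y
    filter_upwards [fwdDiff_ae_eq hu huL hG hGL hw ν hs hf y] with x hx
    refine (enorm_le_of_fwdDiff (m := m) u x y).trans ?_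
    gcongr
    rw [hx]
    exact enorm_sum_directional_le hG ν x y
  have hmeas : MeasurableSet {p : Euc n × Euc n | ‖u p.1‖ₑ ≤
      (∑ k ∈ Finset.range m, (m.choose (k + 1) : ℝ≥0∞) * ‖u (p.1 + (k + 1 : ℕ) • p.2)‖ₑ) +
      ‖p.2‖ₑ ^ m * ∫⁻ t, ENNReal.ofReal |f (p.1 + t • p.2)| ∂ν} := by
    have h1 : Measurable fun p : Euc n × Euc n =>
        ∫⁻ t, ENNReal.ofReal |f (p.1 + t • p.2)| ∂ν :=
      Measurable.lintegral_prod_right' (ν := ν)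
        (f := fun q : (Euc n × Euc n) × ℝ => ENNReal.ofReal |f (q.1.1 + q.2 • q.1.2)|)
        (hF.comp (by fun_prop : Measurable fun q : (Euc n × Euc n) × ℝ => q.1.1 + q.2 • q.1.2))
    refine measurableSet_le (hu.comp measurable_fst).enorm (Measurable.add ?_ ?_)
    · exact Finset.measurable_fun_sum _ fun k _ =>
        measurable_const.mul (hu.comp (by fun_prop)).enorm
    · exact Measurable.mul (by fun_prop) h1
  -- for each `y`, a.e. `x` is turned into: for a.e. `x`, a.e. `y`
  have hae := (Measure.ae_ae_comm (μ := (volume : Measure (Euc n)))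
    (ν := (volume : Measure (Euc n))) hmeas).2 (Eventually.of_forall hline)
  filter_upwards [hae] with x hx
  refine le_trans ?_ (mul_le_mul_right (riesz_potential_le hm hmn hfm x) _)
  set κ : ℝ≥0∞ := ∑ k ∈ Finset.range m, (m.choose (k + 1) : ℝ≥0∞) with hκ
  have hκt : κ ≠ ⊤ := ENNReal.sum_ne_top.2 fun k _ => ENNReal.natCast_ne_top _
  have hlim : Tendsto (fun lam : ℝ => κ * ENNReal.ofReal lam +
      (ENNReal.ofReal (2 ^ (m + n + 1)) / volume (annulus n 1)) *
        ∫⁻ z, ENNReal.ofReal |f (x + z)| * rieszWeight n m z) (nhdsWithin 0 (Ioi 0))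
      (nhds (κ * ENNReal.ofReal 0 + (ENNReal.ofReal (2 ^ (m + n + 1)) / volume (annulus n 1)) *
        ∫⁻ z, ENNReal.ofReal |f (x + z)| * rieszWeight n m z)) := by
    refine Tendsto.add (ENNReal.Tendsto.const_mul ?_ (Or.inr hκt)) tendsto_const_nhds
    exact (ENNReal.continuous_ofReal.tendsto 0).mono_left nhdsWithin_le_nhds
  rw [ENNReal.ofReal_zero, mul_zero, zero_add] at hlim
  refine ge_of_tendsto hlim ?_
  filter_upwards [self_mem_nhdsWithin] with lam hlam
  exact enorm_le_of_ae_line hm hmn hu hF ν hb (hdec lam hlam) x hx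

/-- Let n ≥ 2, m < n. There is C such that every m-times weakly
differentiable u on ℝⁿ with |∇^m u| ∈ L^{n/m,1}(ℝⁿ) that has some decay at infinity
(|{|u| > λ}| < ∞ for all λ > 0) is (essentially) bounded, with
‖u‖_{L^∞} ≤ C‖∇^m u‖_{L^{n/m,1}}. -/
theorem stmt_8 (n m : ℕ) (hn : 2 ≤ n) (hm : 1 ≤ m) (hmn : m < n) :
    ∃ C : ℝ, 0 < C ∧
      ∀ (u : Euc n → ℝ) (D : ∀ k : ℕ, (Fin k → Fin n) → Euc n → ℝ),
        HasWeakDerivs n m u D →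
        lorentzNorm volume ((n : ℝ) / m) 1 (gradAbs n m D) < ⊤ →
        (∀ lam : ℝ, 0 < lam → volume {x : Euc n | lam < |u x|} < ⊤) →
        eLpNorm u ⊤ volume ≤
          ENNReal.ofReal C * lorentzNorm volume ((n : ℝ) / m) 1 (gradAbs n m D) := by
  set K : ℝ≥0∞ := (ENNReal.ofReal (2 ^ (m + n + 1)) / volume (annulus n 1)) *
      ((∫⁻ z in Metric.ball (0 : Euc n) 1, rieszWeight n m z) + 1) with hK
  have hKt : K ≠ ⊤ := ENNReal.mul_ne_top
    (ENNReal.div_ne_top ENNReal.ofReal_ne_top (volume_annulus_pos (by omega)).ne')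
    (ENNReal.add_ne_top.2 ⟨(lintegral_rieszWeight_ball_lt_top hm hmn).ne, by simp⟩)
  refine ⟨K.toReal + 1, by positivity, ?_⟩
  rintro u D ⟨huL, -, hDL, hD⟩ - hdec
  have hum := huL.aestronglyMeasurable
  have hGm := fun a : Fin m → Fin n => (hDL m a le_rfl).aestronglyMeasurable
  set v := hum.mk u with hv
  set G : (Fin m → Fin n) → Euc n → ℝ := fun a => (hGm a).mk (D m a) with hGdef
  have huv : u =ᵐ[volume] v := hum.ae_eq_mk
  have hDG : ∀ a, D m a =ᵐ[volume] G a := fun a => (hGm a).ae_eq_mk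
  have hmain := ae_enorm_le_lorentzNorm hm hmn (u := v) (G := G)
    hum.stronglyMeasurable_mk.measurable (huL.congr huv)
    (fun a => (hGm a).stronglyMeasurable_mk.measurable)
    (fun a => (hDL m a le_rfl).congr (hDG a))
    (fun a φ hφ hc => by
      have h1 := hD m le_rfl a φ hφ hc
      rw [integral_congr_ae (g := fun x => v x *
          iteratedFDeriv ℝ m φ x (fun j => EuclideanSpace.single (a j) 1))
          (by filter_upwards [huv] with x hx; rw [hx]),
        integral_congr_ae (f := fun x => D m a x * φ x) (g := fun x => G a x * φ x)
          (by filter_upwards [hDG a] with x hx; rw [hx])] at h1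
      exact h1)
    (fun lam hlam => by
      refine lt_of_eq_of_lt (measure_congr ?_) (hdec lam hlam)
      filter_upwards [huv] with x hx
      change (lam < |v x|) = (lam < |u x|)
      rw [hx])
  have hgrad : gradAbs n m D =ᵐ[volume] fun x => ∑ a, |G a x| := by
    filter_upwards [ae_all_iff.2 hDG] with x hx
    simp only [gradAbs, hx]
  rw [lorentzNorm_congr_ae _ _ hgrad, eLpNorm_exponent_top]
  refine eLpNormEssSup_le_of_ae_enorm_bound ?_
  filter_upwards [hmain, huv] with x hx hxv
  rw [hxv]
  refine hx.trans ?_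
  rw [← mul_assoc, ← hK]
  gcongr
  exact (ENNReal.le_ofReal_iff_toReal_le hKt (by positivity)).2 (by linarith)
end
end
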